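/- arXiv:1811.04394 — 2 statements merged into one kernel-verified Lean document; each statement's English description precedes it below -/
import Mathlib

section
/- If Δ is a group containing a subgroup of index 2 that is isomorphic to PSL(2, ℤ[ω]), then Δ is isomorphic to one of the following four groups: PGL(2, ℤ[ω]); the Coxeter group Λ₁ = ⟨x, y, z, w ∣ x², y², z², w², (xy)², (xz)², (xw)³, (yz)³, (yw)³, (zw)³⟩; the group Λ₂ = ⟨x, y, z ∣ x², y², z³, z·y·z⁻¹·y, (zx)³, (xy)⁶⟩; or the direct product PSL(2, ℤ[ω]) × ℤ/2ℤ. -/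
/-- The Eisenstein integers `ℤ[ω]`, the ring of integers of `ℚ(ω)` with
`ω² + ω + 1 = 0`. -/
abbrev Eisenstein : Type := NumberField.RingOfIntegers (CyclotomicField 3 ℚ)

/-- `PSL(2,R)`: the quotient of `SL(2,R)` by its center. -/
abbrev PSL2 (R : Type*) [CommRing R] : Type _ :=
  Matrix.SpecialLinearGroup (Fin 2) R ⧸
    Subgroup.center (Matrix.SpecialLinearGroup (Fin 2) R)

/-- `PGL(2,R)`: the quotient of `GL(2,R)` by its center. -/
abbrev PGL2 (R : Type*) [CommRing R] : Type _ :=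
  Matrix.GeneralLinearGroup (Fin 2) R ⧸
    Subgroup.center (Matrix.GeneralLinearGroup (Fin 2) R)

/-- Relators of the Coxeter group
`Λ₁ = ⟨x,y,z,w ∣ x², y², z², w², (xy)², (xz)², (xw)³, (yz)³, (yw)³, (zw)³⟩`. -/
def lambda1Rels : Set (FreeGroup (Fin 4)) :=
  let x := FreeGroup.of (0 : Fin 4)
  let y := FreeGroup.of (1 : Fin 4)
  let z := FreeGroup.of (2 : Fin 4)
  let w := FreeGroup.of (3 : Fin 4)
  {x ^ 2, y ^ 2, z ^ 2, w ^ 2, (x * y) ^ 2, (x * z) ^ 2, (x * w) ^ 3,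
    (y * z) ^ 3, (y * w) ^ 3, (z * w) ^ 3}

/-- The Coxeter group `Λ₁`. -/
abbrev Lambda1 : Type := PresentedGroup lambda1Rels

/-- Relators of `Λ₂ = ⟨x,y,z ∣ x², y², z³, z·y·z⁻¹·y, (zx)³, (xy)⁶⟩`. -/
def lambda2Rels : Set (FreeGroup (Fin 3)) :=
  let x := FreeGroup.of (0 : Fin 3)
  let y := FreeGroup.of (1 : Fin 3)
  let z := FreeGroup.of (2 : Fin 3)
  {x ^ 2, y ^ 2, z ^ 3, z * y * z⁻¹ * y, (z * x) ^ 3, (x * y) ^ 6}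

/-- The group `Λ₂`. -/
abbrev Lambda2 : Type := PresentedGroup lambda2Rels

open Matrix
/-- Concrete model of the Eisenstein integers. -/
abbrev EE : Type := QuadraticAlgebra ℤ (-1) (-1)

namespace EisProof

theorem norm_eq (z : EE) : QuadraticAlgebra.norm z = z.re ^ 2 - z.re * z.im + z.im ^ 2 := by
  rw [QuadraticAlgebra.norm_def]; ring

theorem norm_nonneg (z : EE) : 0 ≤ QuadraticAlgebra.norm z := by
  rw [norm_eq]; nlinarith [sq_nonneg (2 * z.re - z.im), sq_nonneg z.im]

theorem norm_eq_zero {z : EE} (h : QuadraticAlgebra.norm z = 0) : z = 0 := by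
  rw [norm_eq] at h
  have h1 : z.im = 0 := by
    have : z.im ^ 2 = 0 := by nlinarith [sq_nonneg (2 * z.re - z.im), sq_nonneg z.im]
    simpa using this
  have h2 : z.re = 0 := by
    rw [h1] at h
    have : z.re ^ 2 = 0 := by linarith
    simpa using this
  ext <;> simp [h1, h2]

instance : IsDomain EE := by
  have : NoZeroDivisors EE := ⟨by
    intro a b h
    have h2 : QuadraticAlgebra.norm a * QuadraticAlgebra.norm b = 0 := by
      rw [← map_mul, h]; simp
    rcases mul_eq_zero.mp h2 with h3 | h3
    · left; exact norm_eq_zero h3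
    · right; exact norm_eq_zero h3⟩
  exact NoZeroDivisors.to_isDomain _

/-- The primitive cube root of unity. -/
def om : EE := ⟨0, 1⟩

theorem om_sq : om * om = -1 - om := by decide
theorem om_sq' : om ^ 2 = -1 - om := by decide
theorem om_cube : om ^ 3 = 1 := by decide
theorem star_om : star om = om ^ 2 := by decide

theorem exists_div (a c : EE) (hc : c ≠ 0) :
    ∃ q : EE, QuadraticAlgebra.norm (a - q * c) < QuadraticAlgebra.norm c := by
  have hn : 0 < QuadraticAlgebra.norm c := lt_of_le_of_ne (norm_nonneg c)
    (fun h => hc (norm_eq_zero h.symm))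
  set n := QuadraticAlgebra.norm c with hn'
  set x := (a * star c).re with hx
  set y := (a * star c).im with hy
  have key : ∀ m : ℤ, ∃ k : ℤ, 4 * (m - k * n) ^ 2 ≤ n ^ 2 := by
    intro m
    refine ⟨(2 * m + n) / (2 * n), ?_⟩
    have h1 := Int.emod_nonneg (2 * m + n) (show 2 * n ≠ 0 by omega)
    have h2 := Int.emod_lt_of_pos (2 * m + n) (show 0 < 2 * n by omega)
    have h3 := Int.mul_ediv_add_emod (2 * m + n) (2 * n)
    set k := (2 * m + n) / (2 * n)
    set r := (2 * m + n) % (2 * n)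
    have h4 : 2 * (m - k * n) = r - n := by linarith
    have h5 : 4 * (m - k * n) ^ 2 = (r - n) ^ 2 := by rw [← h4]; ring
    rw [h5]; nlinarith
  obtain ⟨k, hk⟩ := key x
  obtain ⟨l, hl⟩ := key y
  refine ⟨⟨k, l⟩, ?_⟩
  have h1 : (QuadraticAlgebra.norm (a - ⟨k, l⟩ * c)) * n
      = (x - k * n) ^ 2 - (x - k * n) * (y - l * n) + (y - l * n) ^ 2 := by
    have h2 : (a - ⟨k, l⟩ * c) * star c = ⟨x - k * n, y - l * n⟩ := by
      have h3 : c * star c = ⟨n, 0⟩ := by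
        rw [← QuadraticAlgebra.algebraMap_norm_eq_mul_star]; rfl
      rw [sub_mul, mul_assoc, h3]
      ext <;> simp [hx, hy]
    have h4 : n = QuadraticAlgebra.norm (star c) := by rw [QuadraticAlgebra.norm_star]
    rw [h4, ← map_mul, h2, norm_eq, ← h4]
  by_contra hcon
  push Not at hcon
  have h6 : n * n ≤ (QuadraticAlgebra.norm (a - ⟨k, l⟩ * c)) * n := by nlinarith
  nlinarith [sq_nonneg ((x - k * n) + (y - l * n))]

theorem unit_form {u : EE} (hu : IsUnit u) :
    ∃ v : EE, v ^ 3 = 1 ∧ (u = v ∨ u = -v) := by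
  have h := QuadraticAlgebra.isUnit_iff_norm_isUnit.mp hu
  have h1 : QuadraticAlgebra.norm u = 1 := by
    rcases Int.isUnit_iff.mp h with h | h
    · exact h
    · have := norm_nonneg u; omega
  rw [norm_eq] at h1
  obtain ⟨x, y⟩ := u
  simp only at h1
  have hx : x ≤ 1 ∧ -1 ≤ x := by constructor <;> nlinarith [sq_nonneg (2 * y - x)]
  have hy : y ≤ 1 ∧ -1 ≤ y := by constructor <;> nlinarith [sq_nonneg (2 * x - y)]
  obtain ⟨hx1, hx2⟩ := hx
  obtain ⟨hy1, hy2⟩ := hy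
  clear h hu
  interval_cases x <;> interval_cases y <;> first | (exfalso; revert h1; decide) | skip
  · exact ⟨⟨-1, -1⟩, by decide, by decide⟩
  · exact ⟨⟨1, 0⟩, by decide, by decide⟩
  · exact ⟨⟨0, 1⟩, by decide, by decide⟩
  · exact ⟨⟨0, 1⟩, by decide, by decide⟩
  · exact ⟨⟨1, 0⟩, by decide, by decide⟩
  · exact ⟨⟨-1, -1⟩, by decide, by decide⟩

theorem root_form {a : EE} (h : a * a + a + 1 = 0) : a = om ∨ a = om ^ 2 := by
  have : (a - om) * (a - om ^ 2) = 0 := by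
    have h2 := om_sq'
    have h3 := om_cube
    linear_combination h - a * h2 + h3
  rcases mul_eq_zero.mp this with h | h
  · left; exact sub_eq_zero.mp h
  · right; exact sub_eq_zero.mp h

theorem cube_form {a : EE} (h : a ^ 3 = 1) : a = 1 ∨ a = om ∨ a = om ^ 2 := by
  have : (a - 1) * (a * a + a + 1) = 0 := by linear_combination h
  rcases mul_eq_zero.mp this with h | h
  · left; exact sub_eq_zero.mp h
  · right; exact root_form h

theorem sq_one_form {a : EE} (h : a * a = 1) : a = 1 ∨ a = -1 := mul_self_eq_one_iff.mp h

/-- The isomorphism with the ring of integers. -/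
theorem exists_ringEquiv : Nonempty (Eisenstein ≃+* EE) := by
  have : NeZero ((3 : ℕ) : ℚ) := ⟨by norm_num⟩
  have hcyc : IsCyclotomicExtension {3} ℚ (CyclotomicField 3 ℚ) :=
    CyclotomicField.isCyclotomicExtension 3 ℚ
  have hζ := IsCyclotomicExtension.zeta_spec 3 ℚ (CyclotomicField 3 ℚ)
  set ζ := IsCyclotomicExtension.zeta 3 ℚ (CyclotomicField 3 ℚ)
  let pb := hζ.integralPowerBasis
  have hdim : pb.dim = 2 := by
    simp only [pb, IsPrimitiveRoot.integralPowerBasis_dim]; decide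
  let z : Eisenstein := hζ.toInteger
  have hz : z * z = (-1 : ℤ) • (1 : Eisenstein) + (-1 : ℤ) • z := by
    have hp : IsPrimitiveRoot z 3 := hζ.toInteger_isPrimitiveRoot
    have h3 := hp.geom_sum_eq_zero (by norm_num)
    simp [Finset.sum_range_succ] at h3
    simp
    linear_combination h3
  let f := QuadraticAlgebra.lift (R := ℤ) (a := -1) (b := -1) ⟨z, hz⟩
  let b := pb.basis.reindex (finCongr hdim)
  have hb0 : b 0 = 1 := by simp [b]
  have hb1 : b 1 = z := by simp [b, pb, z]
  have hf : ∀ x : EE, f x = x.re • (1 : Eisenstein) + x.im • z := by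
    intro x; simp [f, QuadraticAlgebra.lift, Algebra.smul_def]
  refine ⟨(RingEquiv.ofBijective f ⟨?_, ?_⟩).symm⟩
  · rw [injective_iff_map_eq_zero]
    intro x hx
    rw [hf, ← hb0, ← hb1] at hx
    have := Fintype.linearIndependent_iff.mp b.linearIndependent ![x.re, x.im]
      (by simpa [Fin.sum_univ_two] using hx)
    ext
    · simpa using this 0
    · simpa using this 1
  · intro y
    refine ⟨⟨b.repr y 0, b.repr y 1⟩, ?_⟩
    rw [hf]
    have := b.sum_repr y
    rw [Fin.sum_univ_two, hb0, hb1] at this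
    exact this

end EisProof

open Matrix
namespace EisProof
set_option linter.unusedSimpArgs false

/-- Shorthand for the special linear group. -/
abbrev SL : Type := Matrix.SpecialLinearGroup (Fin 2) EE
/-- Shorthand for the projective group. -/
abbrev Gm : Type := PSL2 EE

/-- Constructor of 2x2 matrices of determinant one. -/
def sl (a b c d : EE) (h : a * d - b * c = 1) : SL := ⟨!![a, b; c, d], by
  simp [Matrix.det_fin_two_of, h]⟩

@[simp] theorem sl00 (a b c d : EE) (h) : (sl a b c d h) 0 0 = a := rfl
@[simp] theorem sl01 (a b c d : EE) (h) : (sl a b c d h) 0 1 = b := rfl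
@[simp] theorem sl10 (a b c d : EE) (h) : (sl a b c d h) 1 0 = c := rfl
@[simp] theorem sl11 (a b c d : EE) (h) : (sl a b c d h) 1 1 = d := rfl

theorem sl_ext {A B : SL} (h00 : A 0 0 = B 0 0) (h01 : A 0 1 = B 0 1) (h10 : A 1 0 = B 1 0)
    (h11 : A 1 1 = B 1 1) : A = B := by
  apply Subtype.ext
  apply Matrix.ext
  intro i j
  fin_cases i <;> fin_cases j
  · exact h00
  · exact h01
  · exact h10
  · exact h11

@[simp] theorem mul00 (A B : SL) : (A * B) 0 0 = A 0 0 * B 0 0 + A 0 1 * B 1 0 := by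
  simp [Matrix.mul_apply, Fin.sum_univ_two]
@[simp] theorem mul01 (A B : SL) : (A * B) 0 1 = A 0 0 * B 0 1 + A 0 1 * B 1 1 := by
  simp [Matrix.mul_apply, Fin.sum_univ_two]
@[simp] theorem mul10 (A B : SL) : (A * B) 1 0 = A 1 0 * B 0 0 + A 1 1 * B 1 0 := by
  simp [Matrix.mul_apply, Fin.sum_univ_two]
@[simp] theorem mul11 (A B : SL) : (A * B) 1 1 = A 1 0 * B 0 1 + A 1 1 * B 1 1 := by
  simp [Matrix.mul_apply, Fin.sum_univ_two]
@[simp] theorem inv00 (A : SL) : (A⁻¹) 0 0 = A 1 1 := by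
  simp [Matrix.SpecialLinearGroup.coe_inv, Matrix.adjugate_fin_two]
@[simp] theorem inv01 (A : SL) : (A⁻¹) 0 1 = - A 0 1 := by
  simp [Matrix.SpecialLinearGroup.coe_inv, Matrix.adjugate_fin_two]
@[simp] theorem inv10 (A : SL) : (A⁻¹) 1 0 = - A 1 0 := by
  simp [Matrix.SpecialLinearGroup.coe_inv, Matrix.adjugate_fin_two]
@[simp] theorem inv11 (A : SL) : (A⁻¹) 1 1 = A 0 0 := by
  simp [Matrix.SpecialLinearGroup.coe_inv, Matrix.adjugate_fin_two]
@[simp] theorem one00 : (1 : SL) 0 0 = 1 := by simp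
@[simp] theorem one01 : (1 : SL) 0 1 = 0 := by simp
@[simp] theorem one10 : (1 : SL) 1 0 = 0 := by simp
@[simp] theorem one11 : (1 : SL) 1 1 = 1 := by simp
@[simp] theorem neg_app (A : SL) (i j) : (-A) i j = -(A i j) := by simp

theorem sl_det (A : SL) : A 0 0 * A 1 1 - A 0 1 * A 1 0 = 1 := by
  have := A.det_coe
  rwa [Matrix.det_fin_two] at this

/-- The quotient map. -/
def mk : SL →* Gm := QuotientGroup.mk' _

theorem mk_surj : Function.Surjective mk := QuotientGroup.mk'_surjective _

theorem mem_center {A : SL} : A ∈ Subgroup.center SL ↔ A = 1 ∨ A = -1 := by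
  rw [Matrix.SpecialLinearGroup.mem_center_iff]
  constructor
  · rintro ⟨r, hr, h⟩
    have h1 : r * r = 1 := by simpa [sq] using hr
    have e : ∀ i j, A i j = (Matrix.scalar (Fin 2) r) i j := fun i j => by rw [h]
    rcases sq_one_form h1 with rfl | rfl
    · left; apply sl_ext <;> rw [e] <;> simp
    · right; apply sl_ext <;> rw [e] <;> simp
  · rintro (rfl | rfl)
    · exact ⟨1, by simp, by simp⟩
    · exact ⟨-1, by simp, by
        apply Matrix.ext; intro i j; fin_cases i <;> fin_cases j <;> simp⟩

theorem mk_eq {A B : SL} : mk A = mk B ↔ A = B ∨ A = -B := by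
  have : mk A = mk B ↔ B⁻¹ * A ∈ Subgroup.center SL := by
    rw [eq_comm]; exact QuotientGroup.eq
  rw [this, mem_center, inv_mul_eq_iff_eq_mul, inv_mul_eq_iff_eq_mul]
  simp

theorem mk_neg (A : SL) : mk (-A) = mk A := mk_eq.mpr (Or.inr rfl)

theorem mk_eq_one {A : SL} : mk A = 1 ↔ A = 1 ∨ A = -1 := by
  rw [← map_one mk, mk_eq]

/-- The inversion. -/
def S0 : SL := sl 0 1 (-1) 0 (by ring)
/-- Translations. -/
def T (q : EE) : SL := sl 1 q 0 1 (by ring)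
/-- The diagonal element. -/
def D0 : SL := sl om 0 0 (om ^ 2) (by decide)

theorem T_add (p q : EE) : T (p + q) = T p * T q := by
  apply sl_ext <;> simp [T, add_comm]

theorem T_neg (p : EE) : T (-p) = (T p)⁻¹ := by
  apply sl_ext <;> simp [T]

theorem euclid (K : Subgroup SL) (hS : S0 ∈ K) (hT : ∀ q, T q ∈ K) (n : ℕ) :
    ∀ a c : EE, (QuadraticAlgebra.norm c).toNat ≤ n → ∃ M ∈ K, M 1 0 * a + M 1 1 * c = 0 := by
  induction n using Nat.strong_induction_on with
  | _ n ih =>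
  intro a c hn
  by_cases hc : c = 0
  · exact ⟨1, K.one_mem, by simp [hc]⟩
  obtain ⟨q, hq⟩ := exists_div a c hc
  have h0 := norm_nonneg (a - q * c)
  obtain ⟨M, hM, h⟩ := ih (QuadraticAlgebra.norm (-(a - q * c))).toNat (by
    rw [QuadraticAlgebra.norm_neg]; omega) c (-(a - q * c)) le_rfl
  refine ⟨M * S0 * T (-q), K.mul_mem (K.mul_mem hM hS) (hT _), ?_⟩
  simp [S0, T]
  linear_combination h

theorem T_mem (K : Subgroup SL) (h1 : T 1 ∈ K) (hD : D0 ∈ K) (q : EE) : T q ∈ K := by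
  let A : AddSubgroup EE :=
    { carrier := {q | T q ∈ K}
      add_mem' := by
        intro a b ha hb
        simp only [Set.mem_ofPred_eq] at *
        rw [T_add]; exact K.mul_mem ha hb
      zero_mem' := by
        have : T 0 = 1 := by apply sl_ext <;> simp [T]
        simp only [Set.mem_ofPred_eq, this]; exact K.one_mem
      neg_mem' := by
        intro a ha
        simp only [Set.mem_ofPred_eq] at *
        rw [T_neg]; exact K.inv_mem ha }
  have hA1 : (1 : EE) ∈ A := h1
  have hA2 : (om ^ 2 : EE) ∈ A := by
    have : T (om ^ 2) = D0 * T 1 * D0⁻¹ := by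
      apply sl_ext <;> simp [T, D0] <;> decide
    change T (om ^ 2) ∈ K
    rw [this]
    exact K.mul_mem (K.mul_mem hD h1) (K.inv_mem hD)
  have : q = (q.re - q.im) • (1 : EE) - q.im • (om ^ 2) := by
    rw [om_sq']; ext <;> simp [om, QuadraticAlgebra.re_one, QuadraticAlgebra.im_one]
  change q ∈ A
  rw [this]
  exact A.sub_mem (A.zsmul_mem hA1 _) (A.zsmul_mem hA2 _)

theorem gen (K : Subgroup SL) (hS : S0 ∈ K) (h1 : T 1 ∈ K) (hD : D0 ∈ K) : K = ⊤ := by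
  have hT := T_mem K h1 hD
  have hneg : ∀ A ∈ K, -A ∈ K := by
    intro A hA
    have : -A = S0 * S0 * A := by apply sl_ext <;> simp [S0]
    rw [this]
    exact K.mul_mem (K.mul_mem hS hS) hA
  have upper : ∀ v b : EE, ∀ h, v ^ 3 = 1 → sl v b 0 (v ^ 2) h ∈ K := by
    intro v b h hv
    have e : sl v b 0 (v ^ 2) h = sl v 0 0 (v ^ 2) (by linear_combination hv) * T (v ^ 2 * b) := by
      apply sl_ext <;> simp [T]
      linear_combination -b * hv
    rw [e]
    refine K.mul_mem ?_ (hT _)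
    rcases cube_form hv with rfl | rfl | rfl
    · convert K.one_mem using 1; apply sl_ext <;> simp
    · exact hD
    · convert K.mul_mem hD hD using 1; apply sl_ext <;> simp [D0] <;> decide
  rw [eq_top_iff]
  intro A _
  obtain ⟨M, hM, h⟩ := euclid K hS hT _ (A 0 0) (A 1 0) le_rfl
  suffices hB : M * A ∈ K by
    have := K.mul_mem (K.inv_mem hM) hB
    simpa using this
  have h10 : (M * A) 1 0 = 0 := by simpa using h
  generalize M * A = B at *
  have hdet := sl_det B
  rw [h10, mul_zero, sub_zero] at hdet
  obtain ⟨v, hv, hB | hB⟩ := unit_form (IsUnit.of_mul_eq_one _ hdet)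
  · have h11 : B 1 1 = v ^ 2 := by
      rw [hB] at hdet
      linear_combination v ^ 2 * hdet - B 1 1 * hv
    convert upper v (B 0 1) (by linear_combination hv) hv using 1
    apply sl_ext <;> simp [hB, h11, h10]
  · have h11 : B 1 1 = -v ^ 2 := by
      rw [hB] at hdet
      linear_combination -v ^ 2 * hdet - B 1 1 * hv
    convert hneg _ (upper v (-B 0 1) (by linear_combination hv) hv) using 1
    apply sl_ext <;> simp [hB, h11, h10]

theorem euclid' (a c : EE) : ∃ M : SL, M 1 0 * a + M 1 1 * c = 0 := by
  obtain ⟨M, -, h⟩ := euclid ⊤ trivial (fun _ => trivial) _ a c le_rfl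
  exact ⟨M, h⟩

theorem two_ne : (2 : EE) ≠ 0 := by decide

/-- The center of the projective group is trivial. -/
theorem Gm_center (g : Gm) (h : ∀ x, g * x = x * g) : g = 1 := by
  obtain ⟨A, rfl⟩ := mk_surj g
  have hS := h (mk S0)
  have hT := h (mk (T 1))
  rw [← map_mul, ← map_mul, mk_eq] at hS hT
  rw [mk_eq_one]
  have hdet := sl_det A
  have e : ∀ {X Y : SL}, X = Y → ∀ i j, X i j = Y i j := fun h _ _ => by rw [h]
  have h10 : A 1 0 = 0 := by
    rcases hT with hT | hT
    · have := e hT 0 0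
      simp [T] at this; exact this
    · have h1 := e hT 0 0
      have h2 := e hT 1 0
      have h3 := e hT 1 1
      simp [T] at h1 h2 h3
      have : 2 * A 1 0 = 0 := by linear_combination h2
      simpa [two_ne] using this
  have h01 : A 0 1 = 0 := by
    rcases hS with hS | hS
    · have h1 := e hS 0 0
      simp [S0, h10] at h1
      exact h1
    · have h1 := e hS 0 0
      simp [S0, h10] at h1
      exact h1
  have h11 : A 0 0 = A 1 1 := by
    rcases hT with hT | hT
    · have h1 := e hT 0 1
      simp [T, h10, h01] at h1
      exact h1
    · exfalso
      have h1 := e hT 0 0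
      simp [T, h10, h01] at h1
      have : 2 * A 0 0 = 0 := by linear_combination h1
      have : A 0 0 = 0 := by simpa [two_ne] using this
      simp [this, h10] at hdet
  rw [h01, ← h11, zero_mul, sub_zero] at hdet
  rcases sq_one_form hdet with h | h
  · left; apply sl_ext <;> simp [← h11, h, h10, h01]
  · right; apply sl_ext <;> simp [← h11, h, h10, h01]

end EisProof

open Matrix
namespace EisProof
set_option linter.unusedSimpArgs false

/-- Automorphism induced on the central quotient. -/
def autQ (f : SL ≃* SL) : MulAut Gm :=
  QuotientGroup.congr _ _ f (Subgroup.characteristic_iff_map_eq.mp inferInstance f)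

theorem autQ_mk (f : SL ≃* SL) (A : SL) : autQ f (mk A) = mk (f A) := rfl

/-- Entrywise conjugation. -/
def fs : SL →* SL where
  toFun A := sl (star (A 0 0)) (star (A 0 1)) (star (A 1 0)) (star (A 1 1)) (by
    rw [← star_mul', ← star_mul', ← star_sub, sl_det, star_one])
  map_one' := by apply sl_ext <;> simp
  map_mul' A B := by apply sl_ext <;> simp [mul_comm]

/-- Conjugation by the diagonal matrix with entries 1 and -1. -/
def fd : SL →* SL where
  toFun A := sl (A 0 0) (-A 0 1) (-A 1 0) (A 1 1) (by
    have := sl_det A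
    linear_combination this)
  map_one' := by apply sl_ext <;> simp
  map_mul' A B := by apply sl_ext <;> simp <;> ring

theorem fs_fs (A : SL) : fs (fs A) = A := by apply sl_ext <;> simp [fs]
theorem fd_fd (A : SL) : fd (fd A) = A := by apply sl_ext <;> simp [fd]
theorem fd_fs (A : SL) : fd (fs A) = fs (fd A) := by apply sl_ext <;> simp [fd, fs]

/-- An involutive endomorphism as an equivalence. -/
def invo (f : SL →* SL) (h : ∀ A, f (f A) = A) : SL ≃* SL :=
  { f with invFun := f, left_inv := h, right_inv := h }

/-- Complex conjugation on the projective group. -/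
def sg : MulAut Gm := autQ (invo fs fs_fs)
/-- The diagonal automorphism. -/
def dl : MulAut Gm := autQ (invo fd fd_fd)

theorem sg_mk (A : SL) : sg (mk A) = mk (fs A) := rfl
theorem dl_mk (A : SL) : dl (mk A) = mk (fd A) := rfl

theorem sg_sq : sg * sg = 1 := by
  ext x; obtain ⟨A, rfl⟩ := mk_surj x
  simp [sg_mk, fs_fs]
theorem dl_sq : dl * dl = 1 := by
  ext x; obtain ⟨A, rfl⟩ := mk_surj x
  simp [dl_mk, fd_fd]
theorem sd_sq : (sg * dl) * (sg * dl) = 1 := by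
  ext x; obtain ⟨A, rfl⟩ := mk_surj x
  simp [dl_mk, sg_mk, fd_fs, fd_fd, fs_fs]

/-- The four automorphisms. -/
def IsFour (θ : MulAut Gm) : Prop := θ = 1 ∨ θ = dl ∨ θ = sg ∨ θ = sg * dl

theorem tr_two {X : SL} (h : mk X ^ 2 = 1) (h1 : mk X ≠ 1) : X 0 0 + X 1 1 = 0 := by
  by_contra ht
  apply h1
  rw [mk_eq_one]
  have hdet := sl_det X
  rw [← map_pow, mk_eq_one, sq] at h
  have e : ∀ {X Y : SL}, X = Y → ∀ i j, X i j = Y i j := fun h _ _ => by rw [h]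
  have h01 : X 0 1 * (X 0 0 + X 1 1) = 0 := by
    rcases h with h | h <;> have := e h 0 1 <;> simp at this <;> linear_combination this
  have h10 : X 1 0 * (X 0 0 + X 1 1) = 0 := by
    rcases h with h | h <;> have := e h 1 0 <;> simp at this <;> linear_combination this
  have h01 : X 0 1 = 0 := by simpa [ht] using h01
  have h10 : X 1 0 = 0 := by simpa [ht] using h10
  have hd : (X 0 0 - X 1 1) * (X 0 0 + X 1 1) = 0 := by
    rcases h with h | h <;> have a := e h 0 0 <;> have b := e h 1 1 <;>
      simp [h01] at a b <;> linear_combination a - b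
  have hd : X 0 0 = X 1 1 := by
    have : X 0 0 - X 1 1 = 0 := by simpa [ht] using hd
    exact sub_eq_zero.mp this
  rw [h01, ← hd, zero_mul, sub_zero] at hdet
  rcases sq_one_form hdet with h | h
  · left; apply sl_ext <;> simp [← hd, h, h10, h01]
  · right; apply sl_ext <;> simp [← hd, h, h10, h01]

theorem two_tr {X : SL} (h : X 0 0 + X 1 1 = 0) : mk X ^ 2 = 1 := by
  rw [← map_pow, mk_eq_one, sq]
  right
  have hdet := sl_det X
  apply sl_ext <;> simp
  · linear_combination X 0 0 * h - hdet
  · linear_combination X 0 1 * h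
  · linear_combination X 1 0 * h
  · linear_combination X 1 1 * h - hdet

theorem tr_three {X : SL} (h : mk X ^ 3 = 1) (h1 : mk X ≠ 1) :
    X 0 0 + X 1 1 = 1 ∨ X 0 0 + X 1 1 = -1 := by
  apply sq_one_form
  by_contra ht
  have ht' : (X 0 0 + X 1 1) * (X 0 0 + X 1 1) - 1 ≠ 0 := fun h => ht (sub_eq_zero.mp h)
  apply h1
  rw [mk_eq_one]
  have hdet := sl_det X
  rw [← map_pow, mk_eq_one, pow_succ, sq] at h
  have e : ∀ {X Y : SL}, X = Y → ∀ i j, X i j = Y i j := fun h _ _ => by rw [h]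
  have h01 : X 0 1 * ((X 0 0 + X 1 1) * (X 0 0 + X 1 1) - 1) = 0 := by
    rcases h with h | h <;> have := e h 0 1 <;> simp at this <;>
      linear_combination this + X 0 1 * hdet
  have h10 : X 1 0 * ((X 0 0 + X 1 1) * (X 0 0 + X 1 1) - 1) = 0 := by
    rcases h with h | h <;> have := e h 1 0 <;> simp at this <;>
      linear_combination this + X 1 0 * hdet
  have h01 : X 0 1 = 0 := by simpa [ht'] using h01
  have h10 : X 1 0 = 0 := by simpa [ht'] using h10
  rw [h01, zero_mul, sub_zero] at hdet
  have hd : (X 0 0 - X 1 1) * ((X 0 0 + X 1 1) * (X 0 0 + X 1 1) - 1) = 0 := by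
    rcases h with h | h <;> have a := e h 0 0 <;> have b := e h 1 1 <;>
      simp [h01, h10] at a b <;> linear_combination a - b + (X 0 0 - X 1 1) * hdet
  have hd : X 0 0 = X 1 1 := by
    have : X 0 0 - X 1 1 = 0 := by simpa [ht'] using hd
    exact sub_eq_zero.mp this
  rw [← hd] at hdet
  rcases sq_one_form hdet with h | h
  · left; apply sl_ext <;> simp [← hd, h, h10, h01]
  · right; apply sl_ext <;> simp [← hd, h, h10, h01]

/-- A lift of trace -1. -/
theorem lift_three {x : Gm} (h : x ^ 3 = 1) (h1 : x ≠ 1) :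
    ∃ X : SL, mk X = x ∧ X 0 0 + X 1 1 = -1 := by
  obtain ⟨X, rfl⟩ := mk_surj x
  rcases tr_three h h1 with h | h
  · exact ⟨-X, mk_neg X, by simp; linear_combination -h⟩
  · exact ⟨X, rfl, h⟩

/-- First generator. -/
def P0 : SL := sl 0 (-1) 1 (-1) (by ring)
/-- Second generator. -/
def Q0 : SL := sl om (-om) 0 (om ^ 2) (by decide)
/-- Third generator. -/
def R0 : SL := sl (om ^ 2) (-om ^ 2) 0 om (by decide)

theorem genPQR (K : Subgroup SL) (hP : P0 ∈ K) (hQ : Q0 ∈ K) (hR : R0 ∈ K) : K = ⊤ := by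
  have hD : D0 ∈ K := by
    have : D0 = (Q0 * R0⁻¹) * (Q0 * R0⁻¹) := by
      apply sl_ext <;> simp [D0, Q0, R0] <;> decide
    rw [this]
    exact K.mul_mem (K.mul_mem hQ (K.inv_mem hR)) (K.mul_mem hQ (K.inv_mem hR))
  have hS : S0 ∈ K := by
    have : S0 = (P0 * R0⁻¹ * D0⁻¹)⁻¹ := by
      apply sl_ext <;> simp [D0, P0, R0, S0] <;> decide
    rw [this]
    exact K.inv_mem (K.mul_mem (K.mul_mem hP (K.inv_mem hR)) (K.inv_mem hD))
  have hT : T 1 ∈ K := by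
    have : T 1 = (S0 * P0)⁻¹ := by
      apply sl_ext <;> simp [P0, S0, T]
    rw [this]
    exact K.inv_mem (K.mul_mem hS hP)
  exact gen K hS hT hD

theorem nf (Q R : SL) (hQ : Q 0 0 + Q 1 1 = -1) (hR : R 0 0 + R 1 1 = -1)
    (hQR : (Q * R) 0 0 + (Q * R) 1 1 = 2) (h1 : Q * R ≠ 1) :
    ∃ M : SL, (M * Q * M⁻¹) 1 0 = 0 ∧ (M * R * M⁻¹) 1 0 = 0 := by
  have hex : ∃ M : SL, (M * (Q * R) * M⁻¹) 1 0 = 0 := by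
    have hd := sl_det (Q * R)
    generalize Q * R = N at *
    by_cases hz : N 1 0 = 0
    · exact ⟨1, by simpa using hz⟩
    obtain ⟨M, hM⟩ := euclid' (N 0 0 - 1) (N 1 0)
    refine ⟨M, ?_⟩
    have h2 : N 1 0 * (M * N * M⁻¹) 1 0 = 0 := by
      simp only [mul10, mul11, mul00, mul01, inv00, inv01, inv10, inv11]
      have h11 : N 1 1 = 2 - N 0 0 := by linear_combination hQR
      rw [h11] at hd ⊢
      linear_combination (M 1 0 * (N 0 0 - 1) + M 1 1 * N 1 0) * hM + M 1 0 ^ 2 * hd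
    simpa [hz] using h2
  obtain ⟨M, hN10⟩ := hex
  refine ⟨M, ?_⟩
  have hMd := sl_det M
  have conjtr : ∀ X : SL, (M * X * M⁻¹) 0 0 + (M * X * M⁻¹) 1 1 = X 0 0 + X 1 1 := by
    intro X; simp; linear_combination (X 0 0 + X 1 1) * hMd
  have hQ' := conjtr Q
  have hR' := conjtr R
  have hN' := conjtr (Q * R)
  rw [hQ] at hQ'
  rw [hR] at hR'
  rw [hQR] at hN'
  have hmul : M * R * M⁻¹ = (M * Q * M⁻¹)⁻¹ * (M * (Q * R) * M⁻¹) := by group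
  have hN1 : M * (Q * R) * M⁻¹ ≠ 1 := by
    intro h; apply h1
    have := congrArg (fun x => M⁻¹ * x * M) h
    simpa [mul_assoc] using this
  generalize M * (Q * R) * M⁻¹ = N at *
  rw [hmul] at hR' ⊢
  generalize M * Q * M⁻¹ = Q' at *
  have hd := sl_det N
  rw [hN10, mul_zero, sub_zero] at hd
  have h00 : N 0 0 = 1 := by
    have : (N 0 0 - 1) * (N 0 0 - 1) = 0 := by linear_combination N 0 0 * hN' - hd
    exact sub_eq_zero.mp (mul_self_eq_zero.mp this)
  have h11 : N 1 1 = 1 := by rw [h00] at hd; simpa using hd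
  have h01 : N 0 1 ≠ 0 := by
    intro h; apply hN1
    apply sl_ext <;> simp [h00, h11, h, hN10]
  simp [h00, h11, hN10] at hR' ⊢
  have : Q' 1 0 * N 0 1 = 0 := by linear_combination hQ' - hR'
  simpa [h01] using this

/-- Underlying matrix. -/
def cm (A : SL) : Matrix (Fin 2) (Fin 2) EE := ↑A
theorem cm_mul (A B : SL) : cm (A * B) = cm A * cm B := Matrix.SpecialLinearGroup.coe_mul A B
theorem cm_one : cm 1 = 1 := Matrix.SpecialLinearGroup.coe_one
theorem cm_app (A : SL) (i j) : cm A i j = A i j := rfl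

theorem core (φ : MulAut Gm) (P Q R : SL) (hφP : φ (mk P0) = mk P) (hφQ : φ (mk Q0) = mk Q)
    (hφR : φ (mk R0) = mk R)
    (hP : P 0 0 + P 1 1 = -1) (hQ : Q 0 0 + Q 1 1 = -1) (hR : R 0 0 + R 1 1 = -1)
    (hPQ : (P * Q⁻¹) 0 0 + (P * Q⁻¹) 1 1 = 0) (hPR : (P * R⁻¹) 0 0 + (P * R⁻¹) 1 1 = 0)
    (hQR : (Q * R) 0 0 + (Q * R) 1 1 = 2) (hQ10 : Q 1 0 = 0) (hR10 : R 1 0 = 0) :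
    ∃ γ : Gm, ∃ θ, IsFour θ ∧ ∀ h, φ h = γ * θ h * γ⁻¹ := by
  have hdP := sl_det P
  have hdQ := sl_det Q
  have hdR := sl_det R
  simp [hQ10, hR10] at hdP hdQ hdR hPQ hPR hQR
  have hQ11 : Q 1 1 = -1 - Q 0 0 := by linear_combination hQ
  have hR11 : R 1 1 = -1 - R 0 0 := by linear_combination hR
  have hP11 : P 1 1 = -1 - P 0 0 := by linear_combination hP
  have hq : Q 0 0 * Q 0 0 + Q 0 0 + 1 = 0 := by rw [hQ11] at hdQ; linear_combination -hdQ
  have hr : R 0 0 * R 0 0 + R 0 0 + 1 = 0 := by rw [hR11] at hdR; linear_combination -hdR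
  have hR00 : R 0 0 = Q 1 1 := by
    rw [hQ11, hR11] at hQR
    rw [hQ11]
    rcases root_form hq with h | h <;> rcases root_form hr with h' | h' <;> rw [h, h'] at hQR ⊢ <;>
      first | decide | (exfalso; revert hQR; decide)
  have hR11' : R 1 1 = Q 0 0 := by rw [hR11, hR00, hQ11]; ring
  -- the intertwining matrix
  let g : Matrix (Fin 2) (Fin 2) EE := !![1, P 0 0; 0, P 1 0]
  have main : ∀ f : SL →* SL, (g * cm (f P0) = cm P * g) → (g * cm (f Q0) = cm Q * g) →
      (g * cm (f R0) = cm R * g) → ∀ h, ∃ H : SL, φ (mk h) = mk H ∧ g * cm (f h) = cm H * g := by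
    intro f e1 e2 e3
    let K : Subgroup SL :=
      { carrier := {h | ∃ H : SL, φ (mk h) = mk H ∧ g * cm (f h) = cm H * g}
        one_mem' := ⟨1, by simp, by simp [cm_one]⟩
        mul_mem' := by
          rintro a b ⟨A, hA, hA'⟩ ⟨B, hB, hB'⟩
          refine ⟨A * B, by simp [hA, hB], ?_⟩
          rw [map_mul, cm_mul, cm_mul, ← mul_assoc, hA',
            mul_assoc, hB', mul_assoc]
        inv_mem' := by
          rintro a ⟨A, hA, hA'⟩
          refine ⟨A⁻¹, by simp [hA], ?_⟩
          have i1 : cm A⁻¹ * cm A = 1 := by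
            rw [← cm_mul]; simp [cm_one]
          have i2 : cm (f a) * cm (f a⁻¹) = 1 := by
            rw [← cm_mul, ← map_mul]; simp [cm_one]
          calc g * cm (f a⁻¹) = cm A⁻¹ * cm A * g * cm (f a⁻¹) := by rw [i1, one_mul]
            _ = cm A⁻¹ * (cm A * g) * cm (f a⁻¹) := by simp only [mul_assoc]
            _ = cm A⁻¹ * g * (cm (f a) * cm (f a⁻¹)) := by rw [← hA']; simp only [mul_assoc]
            _ = cm A⁻¹ * g := by rw [i2, mul_one] }
    have hK : K = ⊤ := genPQR K ⟨P, hφP, e1⟩ ⟨Q, hφQ, e2⟩ ⟨R, hφR, e3⟩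
    intro h
    have : h ∈ K := by rw [hK]; trivial
    exact this
  have final : ∀ (f : SL →* SL) (θ : MulAut Gm), (∀ A, θ (mk A) = mk (f A)) → IsFour θ →
      IsFour (dl * θ) →
      (∀ h, ∃ H : SL, φ (mk h) = mk H ∧ g * cm (f h) = cm H * g) →
      ∃ γ : Gm, ∃ θ, IsFour θ ∧ ∀ h, φ h = γ * θ h * γ⁻¹ := by
    intro f θ hθ h4 h4' hall
    have hunit : IsUnit (P 1 0) := by
      obtain ⟨x, hx⟩ := φ.surjective (mk (sl 1 0 1 1 (by ring)))
      obtain ⟨h, rfl⟩ := mk_surj x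
      obtain ⟨H, hH, hg⟩ := hall h
      rw [hx, mk_eq] at hH
      have e := congrFun (congrFun hg 1) 0
      simp [g, cm_app, Matrix.mul_apply, Fin.sum_univ_two] at e
      rcases hH with hH | hH
      · have := congrArg (fun X : SL => X 1 0) hH
        simp at this
        refine IsUnit.of_mul_eq_one ((f h) 1 0) ?_
        linear_combination e - this
      · have := congrArg (fun X : SL => X 1 0) hH
        simp at this
        refine IsUnit.of_mul_eq_one (-(f h) 1 0) ?_
        linear_combination -e - this
    obtain ⟨v, hv, hs⟩ := unit_form hunit
    have hvv : v * v ^ 2 = 1 := by linear_combination hv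
    rcases hs with hs | hs
    · let g1 : SL := sl v (v * P 0 0) 0 (v ^ 2) (by linear_combination hv)
      refine ⟨mk g1, θ, h4, ?_⟩
      intro x
      obtain ⟨h, rfl⟩ := mk_surj x
      obtain ⟨H, hH, hg⟩ := hall h
      rw [hθ, hH, ← map_mul, ← map_inv, ← map_mul]
      congr 1
      rw [eq_mul_inv_iff_mul_eq]
      have e : ∀ i j, _ := fun i j => congrFun (congrFun hg i) j
      have e00 := e 0 0
      have e01 := e 0 1
      have e10 := e 1 0
      have e11 := e 1 1
      simp [g, cm_app, Matrix.mul_apply, Fin.sum_univ_two] at e00 e01 e10 e11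
      rw [hs] at e01 e10 e11
      apply sl_ext <;> simp [g1]
      · linear_combination -v * e00
      · linear_combination -v * e01
      · linear_combination -v * e10
      · linear_combination -v * e11
    · let g1 : SL := sl v (-v * P 0 0) 0 (v ^ 2) (by linear_combination hv)
      refine ⟨mk g1, dl * θ, h4', ?_⟩
      intro x
      obtain ⟨h, rfl⟩ := mk_surj x
      obtain ⟨H, hH, hg⟩ := hall h
      rw [MulAut.mul_apply, hθ, dl_mk, hH, ← map_mul, ← map_inv, ← map_mul]
      congr 1
      rw [eq_mul_inv_iff_mul_eq]
      have e : ∀ i j, _ := fun i j => congrFun (congrFun hg i) j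
      have e00 := e 0 0
      have e01 := e 0 1
      have e10 := e 1 0
      have e11 := e 1 1
      simp [g, cm_app, Matrix.mul_apply, Fin.sum_univ_two] at e00 e01 e10 e11
      rw [hs] at e01 e10 e11
      apply sl_ext <;> simp [g1, fd]
      · linear_combination -v * e00
      · linear_combination v * e01
      · linear_combination -v * e10
      · linear_combination v * e11
  have dlsg : dl * sg = sg * dl := by
    ext x; obtain ⟨A, rfl⟩ := mk_surj x
    simp [dl_mk, sg_mk, fd_fs]
  have mext : ∀ A B : Matrix (Fin 2) (Fin 2) EE, A 0 0 = B 0 0 → A 0 1 = B 0 1 → A 1 0 = B 1 0 →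
      A 1 1 = B 1 1 → A = B := by
    intro A B h1 h2 h3 h4
    apply Matrix.ext; intro i j; fin_cases i <;> fin_cases j
    · exact h1
    · exact h2
    · exact h3
    · exact h4
  have o2 := om_sq'
  have o3 := om_cube
  rw [hR00, hR11'] at hPR
  rcases root_form hq with h | h
  · have hQ11' : Q 1 1 = om ^ 2 := by rw [hQ11, h]; decide
    rw [hQ11', h] at hPR hPQ
    rw [hQ11'] at hR00
    rw [h] at hR11'
    refine final (MonoidHom.id _) 1 (fun A => rfl) (Or.inl rfl) (Or.inr (Or.inl (mul_one _)))
      (main _ ?_ ?_ ?_)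
    · apply mext <;> simp [g, cm_app, Matrix.mul_apply, Fin.sum_univ_two, P0]
      · linear_combination hdP - P 0 0 * hP
      · linear_combination -P 1 0 * hP
    · apply mext <;> simp [g, cm_app, Matrix.mul_apply, Fin.sum_univ_two, Q0, hQ10, hQ11', h]
      · rw [hP11] at hPQ; linear_combination hPQ
      · ring
    · apply mext <;> simp [g, cm_app, Matrix.mul_apply, Fin.sum_univ_two, R0, hR10, hR11', hR00]
      · rw [hP11] at hPR; linear_combination hPR
      · ring
  · have hQ11' : Q 1 1 = om := by rw [hQ11, h]; decide
    rw [hQ11', h] at hPR hPQ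
    rw [hQ11'] at hR00
    rw [h] at hR11'
    have s2 : star om ^ 2 = om := by decide
    refine final fs sg sg_mk (Or.inr (Or.inr (Or.inl rfl)))
      (Or.inr (Or.inr (Or.inr dlsg))) (main _ ?_ ?_ ?_)
    · apply mext <;> simp [g, cm_app, Matrix.mul_apply, Fin.sum_univ_two, P0, fs]
      · linear_combination hdP - P 0 0 * hP
      · linear_combination -P 1 0 * hP
    · apply mext <;> simp [g, cm_app, Matrix.mul_apply, Fin.sum_univ_two, Q0, hQ10, hQ11', h, fs, s2] <;>
        try simp [star_om]
      · rw [hP11] at hPQ; linear_combination hPQ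
      · ring
    · apply mext <;> simp [g, cm_app, Matrix.mul_apply, Fin.sum_univ_two, R0, hR10, hR11', hR00, fs, s2] <;>
        try simp [star_om]
      · rw [hP11] at hPR; linear_combination hPR
      · ring

theorem aut_class (φ : MulAut Gm) : ∃ γ : Gm, ∃ θ, IsFour θ ∧ ∀ h, φ h = γ * θ h * γ⁻¹ := by
  have ne1 : ∀ X : SL, X ≠ 1 → X ≠ -1 → φ (mk X) ≠ 1 := by
    intro X h1 h2 h
    have : mk X = 1 := by simpa using h
    rcases mk_eq_one.mp this with h | h
    · exact h1 h
    · exact h2 h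
  have e : ∀ {X Y : SL}, X = Y → ∀ i j, X i j = Y i j := fun h _ _ => by rw [h]
  have pw : ∀ (X : SL) (n : ℕ), X ^ n = 1 ∨ X ^ n = -1 → (φ (mk X)) ^ n = 1 := by
    intro X n h
    rw [← map_pow, ← map_pow, mk_eq_one.mpr h, map_one]
  obtain ⟨P, hφP, hP⟩ := lift_three (pw P0 3 (by decide)) (ne1 P0 (by decide) (by decide))
  obtain ⟨Q, hφQ, hQ⟩ := lift_three (pw Q0 3 (by decide)) (ne1 Q0 (by decide) (by decide))
  obtain ⟨R, hφR, hR⟩ := lift_three (pw R0 3 (by decide)) (ne1 R0 (by decide) (by decide))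
  have hPQ : (P * Q⁻¹) 0 0 + (P * Q⁻¹) 1 1 = 0 := by
    have e : mk (P * Q⁻¹) = φ (mk (P0 * Q0⁻¹)) := by simp [hφP, hφQ]
    apply tr_two <;> rw [e]
    · exact pw _ 2 (by decide)
    · exact ne1 _ (by decide) (by decide)
  have hPR : (P * R⁻¹) 0 0 + (P * R⁻¹) 1 1 = 0 := by
    have e : mk (P * R⁻¹) = φ (mk (P0 * R0⁻¹)) := by simp [hφP, hφR]
    apply tr_two <;> rw [e]
    · exact pw _ 2 (by decide)
    · exact ne1 _ (by decide) (by decide)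
  have eQR : mk (Q * R) = φ (mk (Q0 * R0)) := by simp [hφQ, hφR]
  have hQR : (Q * R) 0 0 + (Q * R) 1 1 = 2 := by
    have e : mk (Q * R⁻¹) = φ (mk (Q0 * R0⁻¹)) := by simp [hφQ, hφR]
    have h3 := tr_three (X := Q * R⁻¹) (by rw [e]; exact pw _ 3 (by decide))
      (by rw [e]; exact ne1 _ (by decide) (by decide))
    have hR11 : R 1 1 = -1 - R 0 0 := by linear_combination hR
    have hQ11 : Q 1 1 = -1 - Q 0 0 := by linear_combination hQ
    rcases h3 with h3 | h3
    · exfalso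
      have h0 : (Q * R) 0 0 + (Q * R) 1 1 = 0 := by
        simp [hQ11, hR11] at h3 ⊢
        linear_combination -h3
      have h2 := two_tr h0
      rw [eQR, ← map_pow, ← map_pow] at h2
      exact ne1 ((Q0 * R0) ^ 2) (by decide) (by decide) h2
    · simp [hQ11, hR11] at h3 ⊢
      linear_combination -h3
  have hQR1 : Q * R ≠ 1 := by
    intro h
    rw [h, map_one] at eQR
    exact ne1 (Q0 * R0) (by decide) (by decide) eQR.symm
  obtain ⟨M, hMQ, hMR⟩ := nf Q R hQ hR hQR hQR1
  have hMd := sl_det M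
  have conjtr : ∀ X : SL, (M * X * M⁻¹) 0 0 + (M * X * M⁻¹) 1 1 = X 0 0 + X 1 1 := by
    intro X; simp; linear_combination (X 0 0 + X 1 1) * hMd
  obtain ⟨γ, θ, h4, h⟩ := core (MulAut.conj (mk M) * φ) (M * P * M⁻¹) (M * Q * M⁻¹) (M * R * M⁻¹)
    (by simp [hφP]) (by simp [hφQ]) (by simp [hφR])
    (by rw [conjtr, hP]) (by rw [conjtr, hQ]) (by rw [conjtr, hR])
    (by rw [← hPQ, ← conjtr (P * Q⁻¹), show M * P * M⁻¹ * (M * Q * M⁻¹)⁻¹ = M * (P * Q⁻¹) * M⁻¹ by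
      group])
    (by rw [← hPR, ← conjtr (P * R⁻¹), show M * P * M⁻¹ * (M * R * M⁻¹)⁻¹ = M * (P * R⁻¹) * M⁻¹ by
      group])
    (by rw [← hQR, ← conjtr (Q * R), show M * Q * M⁻¹ * (M * R * M⁻¹) = M * (Q * R) * M⁻¹ by
      group]) hMQ hMR
  refine ⟨(mk M)⁻¹ * γ, θ, h4, ?_⟩
  intro x
  have := h x
  rw [MulAut.mul_apply, MulAut.conj_apply] at this
  have h2 : φ x = (mk M)⁻¹ * (mk M * φ x * (mk M)⁻¹) * mk M := by group
  rw [h2, this]; group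

end EisProof

open Matrix
namespace EisProof
set_option linter.unusedSimpArgs false

theorem z2_cases (k : Multiplicative (ZMod 2)) : k = 1 ∨ k = Multiplicative.ofAdd 1 := by
  revert k; decide

/-- The homomorphism from the cyclic group of order two given by an involution. -/
def z2hom {G : Type*} [Group G] (g : G) (h : g * g = 1) : Multiplicative (ZMod 2) →* G where
  toFun k := if k = 1 then 1 else g
  map_one' := by simp
  map_mul' a b := by
    have n : (Multiplicative.ofAdd (1 : ZMod 2)) ≠ 1 := by decide
    have m : (Multiplicative.ofAdd (1 : ZMod 2)) * Multiplicative.ofAdd 1 = 1 := by decide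
    rcases z2_cases a with rfl | rfl <;> rcases z2_cases b with rfl | rfl <;>
      simp [n, m, h, -ofAdd_eq_one, -ofAdd_add]

theorem z2hom_gen {G : Type*} [Group G] (g : G) (h : g * g = 1) :
    z2hom g h (Multiplicative.ofAdd 1) = g := by
  have n : (Multiplicative.ofAdd (1 : ZMod 2)) ≠ 1 := by decide
  simp [z2hom, n, -ofAdd_eq_one]

variable {N : Type*} [Group N] (θ : MulAut N) (hθ : θ * θ = 1)

/-- Semidirect product with the cyclic group of order two. -/
abbrev SD : Type _ := N ⋊[z2hom θ hθ] Multiplicative (ZMod 2)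

/-- Normal factor. -/
def il : N →* SD θ hθ := SemidirectProduct.inl
/-- The involution. -/
def tt : SD θ hθ := SemidirectProduct.inr (Multiplicative.ofAdd 1)

theorem tt_sq : tt θ hθ * tt θ hθ = 1 := by
  rw [tt, ← map_mul, show (Multiplicative.ofAdd (1 : ZMod 2)) * Multiplicative.ofAdd 1 = 1 by decide,
    map_one]

theorem tt_inv : (tt θ hθ)⁻¹ = tt θ hθ := inv_eq_of_mul_eq_one_left (tt_sq θ hθ)

theorem tt_conj (h : N) : tt θ hθ * il θ hθ h * (tt θ hθ)⁻¹ = il θ hθ (θ h) := by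
  have := SemidirectProduct.inl_aut (φ := z2hom θ hθ) (Multiplicative.ofAdd 1) h
  rw [z2hom_gen] at this
  rw [tt, il, this, map_inv]

theorem tt_comm (h : N) : tt θ hθ * il θ hθ h = il θ hθ (θ h) * tt θ hθ := by
  rw [← tt_conj]; group

theorem il_inj : Function.Injective (il θ hθ) := SemidirectProduct.inl_injective

theorem sd_cases (x : SD θ hθ) : (∃ h, x = il θ hθ h) ∨ ∃ h, x = il θ hθ h * tt θ hθ := by
  have := SemidirectProduct.inl_left_mul_inr_right x
  rcases z2_cases x.right with h | h
  · left; refine ⟨x.left, ?_⟩; rw [← this, h]; simp [il]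
  · right; refine ⟨x.left, ?_⟩; rw [← this, h]; simp [il, tt]

theorem tt_not (h : N) : tt θ hθ ≠ il θ hθ h := by
  intro e
  have := congrArg SemidirectProduct.right e
  simp [tt, il] at this

variable {Δ : Type*} [Group Δ]

/-- Universal property. -/
def liftSD (i : N →* Δ) (t : Δ) (ht : t * t = 1) (hc : ∀ h, t * i h * t⁻¹ = i (θ h)) :
    SD θ hθ →* Δ :=
  SemidirectProduct.lift i (z2hom t ht) (by
    intro k
    ext h
    rcases z2_cases k with rfl | rfl
    · simp
    · simp [z2hom_gen, hc])

theorem liftSD_il (i : N →* Δ) (t : Δ) (ht) (hc) (h : N) :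
    liftSD θ hθ i t ht hc (il θ hθ h) = i h := by simp [liftSD, il]
theorem liftSD_tt (i : N →* Δ) (t : Δ) (ht) (hc) :
    liftSD θ hθ i t ht hc (tt θ hθ) = t := by simp [liftSD, tt, z2hom_gen]

theorem sd_equiv (i : N →* Δ) (hi : Function.Injective i) (t : Δ) (ht : t * t = 1)
    (hc : ∀ h, t * i h * t⁻¹ = i (θ h)) (hn : ∀ h, t ≠ i h)
    (hcov : ∀ x, (∃ h, x = i h) ∨ ∃ h, x = i h * t) : Nonempty (SD θ hθ ≃* Δ) := by
  refine ⟨MulEquiv.ofBijective (liftSD θ hθ i t ht hc) ⟨?_, ?_⟩⟩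
  · rw [injective_iff_map_eq_one]
    intro x hx
    rcases sd_cases θ hθ x with ⟨h, rfl⟩ | ⟨h, rfl⟩
    · rw [liftSD_il] at hx
      rw [(injective_iff_map_eq_one i).mp hi h hx, map_one]
    · rw [map_mul, liftSD_il, liftSD_tt] at hx
      exact absurd (by rw [map_inv]; exact eq_inv_of_mul_eq_one_right hx) (hn h⁻¹)
  · intro x
    rcases hcov x with ⟨h, rfl⟩ | ⟨h, rfl⟩
    · exact ⟨il θ hθ h, liftSD_il ..⟩
    · exact ⟨il θ hθ h * tt θ hθ, by rw [map_mul, liftSD_il, liftSD_tt]⟩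

theorem four_sq {θ : MulAut Gm} (h : IsFour θ) : θ * θ = 1 := by
  rcases h with rfl | rfl | rfl | rfl
  · simp
  · exact dl_sq
  · exact sg_sq
  · exact sd_sq

/-- Every extension is one of the four semidirect products. -/
theorem ext_class (H : Subgroup Δ) (hH : H.index = 2) (e : H ≃* Gm) :
    ∃ θ, ∃ h4 : IsFour θ, Nonempty (SD θ (four_sq h4) ≃* Δ) := by
  have hN : H.Normal := Subgroup.normal_of_index_eq_two hH
  obtain ⟨t, ht⟩ : ∃ t, t ∉ H := by
    by_contra! h
    have : H = ⊤ := by ext x; simp [h x]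
    rw [this] at hH; simp at hH
  let c : MulAut H := MulAut.conjNormal t
  let φ : MulAut Gm := e.symm.trans (c.trans e)
  obtain ⟨γ, θ, h4, hφ⟩ := aut_class φ
  refine ⟨θ, h4, ?_⟩
  let i : Gm →* Δ := H.subtype.comp e.symm.toMonoidHom
  have hi : Function.Injective i := H.subtype_injective.comp e.symm.injective
  have hiH : ∀ h, i h ∈ H := fun h => (e.symm h).2
  have hiS : ∀ x ∈ H, ∃ h, x = i h := fun x hx => ⟨e ⟨x, hx⟩, by simp [i]⟩
  have hti : ∀ h, t * i h * t⁻¹ = i (φ h) := by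
    intro h
    simp [i, φ, c]
  let s := (i γ)⁻¹ * t
  have hs : s ∉ H := fun h => ht (by
    have := H.mul_mem (hiH γ) h
    simpa [s] using this)
  have hsi : ∀ h, s * i h * s⁻¹ = i (θ h) := by
    intro h
    have : s * i h * s⁻¹ = (i γ)⁻¹ * (t * i h * t⁻¹) * i γ := by simp only [s]; group
    rw [this, hti, hφ]; simp only [map_mul, map_inv]; group
  have hss : s * s ∈ H := Subgroup.mul_self_mem_of_index_two hH s
  have hs1 : s * s = 1 := by
    obtain ⟨k, hk⟩ := hiS _ hss
    have : k = 1 := by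
      apply Gm_center
      intro x
      apply hi
      rw [map_mul, map_mul, ← hk]
      have h1 : s * s * i x = (s * (s * i x * s⁻¹) * s⁻¹) * (s * s) := by group
      have h2 : θ (θ x) = x := by
        have := congrArg (fun f : MulAut Gm => f x) (four_sq h4); simpa using this
      rw [h1, hsi, hsi, h2]
    rw [hk, this, map_one]
  refine sd_equiv θ _ i hi s hs1 hsi (fun h e => hs (e ▸ hiH h)) ?_
  intro x
  by_cases hx : x ∈ H
  · left; exact hiS x hx
  · right
    have : x * s⁻¹ ∈ H := by
      rw [Subgroup.mul_mem_iff_of_index_two hH]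
      simp [hx, hs]
    obtain ⟨h, hh⟩ := hiS _ this
    exact ⟨h, by rw [← hh]; group⟩

end EisProof

open Matrix
namespace EisProof
set_option linter.unusedSimpArgs false

theorem center_congr {G H : Type*} [Group G] [Group H] (e : G ≃* H) :
    Nonempty (G ⧸ Subgroup.center G ≃* H ⧸ Subgroup.center H) := by
  refine ⟨QuotientGroup.congr _ _ e ?_⟩
  ext x
  simp only [Subgroup.mem_map, Subgroup.mem_center_iff]
  constructor
  · rintro ⟨y, hy, rfl⟩ g
    have := congrArg e (hy (e.symm g))
    simpa using this
  · intro hx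
    refine ⟨e.symm x, ?_, by simp⟩
    intro g
    apply e.injective
    simpa using hx (e g)

theorem psl_congr {R S : Type} [CommRing R] [CommRing S] (e : R ≃+* S) :
    Nonempty (PSL2 R ≃* PSL2 S) := by
  refine center_congr (G := Matrix.SpecialLinearGroup (Fin 2) R)
    (H := Matrix.SpecialLinearGroup (Fin 2) S)
    { Matrix.SpecialLinearGroup.map (n := Fin 2) (e : R →+* S) with
      invFun := Matrix.SpecialLinearGroup.map (n := Fin 2) (e.symm : S →+* R)
      left_inv := ?_, right_inv := ?_ }
  · intro x; apply Matrix.SpecialLinearGroup.ext; intro i j; simp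
  · intro x; apply Matrix.SpecialLinearGroup.ext; intro i j; simp

theorem pgl_congr {R S : Type} [CommRing R] [CommRing S] (e : R ≃+* S) :
    Nonempty (PGL2 R ≃* PGL2 S) :=
  center_congr (G := Matrix.GeneralLinearGroup (Fin 2) R)
    (H := Matrix.GeneralLinearGroup (Fin 2) S)
    (Units.mapEquiv (e.mapMatrix (m := Fin 2)).toMulEquiv)

theorem prod_equiv : Nonempty (SD (1 : MulAut Gm) (by simp) ≃* Gm × Multiplicative (ZMod 2)) := by
  refine sd_equiv 1 _ (MonoidHom.inl _ _) (fun a b h => by simpa using h)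
    (1, Multiplicative.ofAdd 1) ?_ ?_ ?_ ?_
  · apply Prod.ext
    · simp
    · exact (by decide : Multiplicative.ofAdd (1 : ZMod 2) * Multiplicative.ofAdd 1 = 1)
  · intro h; ext <;> simp
  · intro h e
    have := congrArg Prod.snd e
    simp at this
  · rintro ⟨x, k⟩
    rcases z2_cases k with rfl | rfl
    · exact Or.inl ⟨x, rfl⟩
    · exact Or.inr ⟨x, by simp⟩

/-- The diagonal matrix with entries 1 and -1. -/
def gd : GL (Fin 2) EE := ⟨!![1, 0; 0, -1], !![1, 0; 0, -1], by decide, by decide⟩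

theorem gext {A B : GL (Fin 2) EE} (h00 : A 0 0 = B 0 0) (h01 : A 0 1 = B 0 1)
    (h10 : A 1 0 = B 1 0) (h11 : A 1 1 = B 1 1) : A = B := by
  apply Units.ext
  apply Matrix.ext; intro i j; fin_cases i <;> fin_cases j
  · exact h00
  · exact h01
  · exact h10
  · exact h11

/-- Projection. -/
def gk : GL (Fin 2) EE →* PGL2 EE := QuotientGroup.mk' _

theorem gk_eq {A B : GL (Fin 2) EE} : gk A = gk B ↔ A⁻¹ * B ∈ Subgroup.center (GL (Fin 2) EE) :=
  QuotientGroup.eq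

theorem gk_scalar (u : EEˣ) (A : GL (Fin 2) EE) :
    gk (Matrix.GeneralLinearGroup.scalar (Fin 2) u * A) = gk A := by
  rw [map_mul]
  have : gk (Matrix.GeneralLinearGroup.scalar (Fin 2) u) = 1 := by
    rw [← map_one gk, eq_comm, gk_eq, inv_one, one_mul,
      Matrix.GeneralLinearGroup.center_eq_range_scalar]
    exact ⟨u, rfl⟩
  rw [this, one_mul]

/-- The inclusion of PSL in PGL. -/
def ipgl : Gm →* PGL2 EE :=
  QuotientGroup.lift _ (gk.comp Matrix.SpecialLinearGroup.toGL) (by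
    intro A hA
    rw [MonoidHom.mem_ker, MonoidHom.comp_apply, ← map_one gk, eq_comm, gk_eq, inv_one, one_mul]
    exact (Matrix.SpecialLinearGroup.toGL_mem_center_iff _).mpr hA)

theorem ipgl_mk (A : SL) : ipgl (mk A) = gk (Matrix.SpecialLinearGroup.toGL A) := rfl

theorem gl_app_toGL (A : SL) (i j) : (Matrix.SpecialLinearGroup.toGL A) i j = A i j := rfl
theorem gd00 : gd 0 0 = 1 := rfl
theorem gd01 : gd 0 1 = 0 := rfl
theorem gd10 : gd 1 0 = 0 := rfl
theorem gd11 : gd 1 1 = -1 := rfl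
theorem gl_mul (A B : GL (Fin 2) EE) (i j) : (A * B) i j = A i 0 * B 0 j + A i 1 * B 1 j := by
  rw [Units.val_mul, Matrix.mul_apply, Fin.sum_univ_two]
theorem gd_sq : gd * gd = 1 := by
  apply gext <;> rw [gl_mul] <;> simp [gd00, gd01, gd10, gd11]

theorem gl_of_det_one (A : GL (Fin 2) EE) (h : A 0 0 * A 1 1 - A 0 1 * A 1 0 = 1) :
    ∃ B : SL, A = Matrix.SpecialLinearGroup.toGL B :=
  ⟨sl (A 0 0) (A 0 1) (A 1 0) (A 1 1) h, by apply gext <;> simp [gl_app_toGL]⟩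

theorem pgl_equiv : Nonempty (SD dl dl_sq ≃* PGL2 EE) := by
  refine sd_equiv dl _ ipgl ?_ (gk gd) ?_ ?_ ?_ ?_
  · rw [injective_iff_map_eq_one]
    intro x hx
    obtain ⟨A, rfl⟩ := mk_surj x
    rw [ipgl_mk, ← map_one gk, eq_comm, gk_eq, inv_one, one_mul,
      Matrix.SpecialLinearGroup.toGL_mem_center_iff, mem_center] at hx
    exact mk_eq_one.mpr hx
  · rw [← map_mul, gd_sq, map_one]
  · intro x
    obtain ⟨A, rfl⟩ := mk_surj x
    rw [dl_mk, ipgl_mk, ipgl_mk, mul_inv_eq_iff_eq_mul, ← map_mul, ← map_mul]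
    congr 1
    apply gext <;> rw [gl_mul, gl_mul] <;> simp [gd00, gd01, gd10, gd11, gl_app_toGL, fd]
  · intro x
    obtain ⟨A, rfl⟩ := mk_surj x
    rw [ipgl_mk]
    intro h
    rw [gk_eq, Matrix.GeneralLinearGroup.center_eq_range_scalar] at h
    obtain ⟨u, hu⟩ := h
    have h2 := eq_inv_mul_iff_mul_eq.mp hu
    have e : ∀ i j, (gd * Matrix.GeneralLinearGroup.scalar (Fin 2) u) i j = A i j := by
      intro i j; rw [h2]; rfl
    have hd := sl_det A
    rw [← e, ← e, ← e, ← e] at hd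
    simp only [gl_mul] at hd
    simp [gd00, gd01, gd10, gd11] at hd
    obtain ⟨v, hv, hs⟩ := unit_form u.isUnit
    have hv6 : (u : EE) ^ 6 = 1 := by
      rcases hs with hs | hs <;> rw [hs]
      · linear_combination (v ^ 3 + 1) * hv
      · linear_combination (v ^ 3 + 1) * hv
    have h6 : (u : EE) ^ 6 = -1 := by
      have : (u : EE) ^ 2 = -1 := by linear_combination -hd
      calc (u : EE) ^ 6 = ((u : EE) ^ 2) ^ 3 := by ring
        _ = -1 := by rw [this]; ring
    rw [hv6] at h6
    revert h6; decide
  · intro x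
    obtain ⟨A, rfl⟩ : ∃ A, x = gk A := by
      obtain ⟨A, h⟩ := QuotientGroup.mk'_surjective _ x
      exact ⟨A, h.symm⟩
    have hdet : IsUnit (A 0 0 * A 1 1 - A 0 1 * A 1 0) := by
      have := (Matrix.isUnit_iff_isUnit_det _).mp A.isUnit
      rwa [Matrix.det_fin_two] at this
    obtain ⟨v, hv, hs⟩ := unit_form hdet
    let u : EEˣ := ⟨v, v ^ 2, by linear_combination hv, by linear_combination hv⟩
    have hu : ∀ i j, (Matrix.GeneralLinearGroup.scalar (Fin 2) u * A) i j = v * A i j := by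
      intro i j
      fin_cases i <;> simp [gl_mul, u]
    rcases hs with hs | hs
    · left
      obtain ⟨B, hB⟩ := gl_of_det_one (Matrix.GeneralLinearGroup.scalar (Fin 2) u * A) (by
        simp only [hu]; linear_combination v ^ 2 * hs + hv)
      exact ⟨mk B, by rw [ipgl_mk, ← hB, gk_scalar]⟩
    · right
      obtain ⟨B, hB⟩ := gl_of_det_one (Matrix.GeneralLinearGroup.scalar (Fin 2) u * A * gd) (by
        simp only [gl_mul _ gd]
        simp only [hu, gd00, gd01, gd10, gd11]; linear_combination -v ^ 2 * hs + hv)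
      exact ⟨mk B, by rw [ipgl_mk, ← hB, ← map_mul, mul_assoc, gd_sq, mul_one, gk_scalar]⟩

end EisProof

open Matrix
namespace EisProof
set_option linter.unusedSimpArgs false

section Tits
variable {B W V : Type*} [Group W] [AddCommGroup V] {M : CoxeterMatrix B}

theorem tits (cs : CoxeterSystem M W) (ρ : W →* AddMonoid.End V) (α : B → V) (L : V →+ ℤ)
    (hm : ∀ i j, i ≠ j → M i j = 2 ∨ M i j = 3)
    (h1 : ∀ i, ρ (cs.simple i) (α i) = -α i)
    (h2 : ∀ i j, M i j = 2 → ρ (cs.simple i) (α j) = α j)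
    (h3 : ∀ i j, M i j = 3 → ρ (cs.simple i) (α j) = α i + α j)
    (hL : ∀ i, 0 < L (α i)) (w : W) (hw : ρ w = 1) : w = 1 := by
  have mulap : ∀ a b v, ρ (a * b) v = ρ a (ρ b v) := by intro a b v; rw [map_mul]; rfl
  have key : ∀ n : ℕ, ∀ w, cs.length w = n → ∀ s, cs.length w < cs.length (w * cs.simple s) →
      0 ≤ L (ρ w (α s)) := by
    intro n
    induction n using Nat.strong_induction_on with
    | _ n ih =>
      intro w hwn s hs
      by_cases hw1 : w = 1
      · subst hw1; rw [map_one]; exact (hL s).le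
      obtain ⟨t, ht⟩ := cs.exists_rightDescent_of_ne_one hw1
      rw [cs.isRightDescent_iff] at ht
      obtain ⟨w', hw'⟩ : ∃ w', w' = w * cs.simple t := ⟨_, rfl⟩
      have hww : w = w' * cs.simple t := by rw [hw']; simp
      rw [← hw'] at ht
      have hne : t ≠ s := by
        rintro rfl
        rw [← hw'] at hs; omega
      have hb := cs.simple_mul_simple_pow t s
      have hup : cs.length w' < cs.length (w' * cs.simple t) := by rw [← hww]; omega
      rcases hm t s hne with hm | hm
      · rw [hww, mulap, h2 t s hm]
        apply ih _ (by omega) w' rfl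
        have hcomm : cs.simple t * cs.simple s = cs.simple s * cs.simple t := by
          rw [hm, sq] at hb
          have := eq_inv_of_mul_eq_one_left hb
          simpa using this
        have e : w * cs.simple s = w' * cs.simple s * cs.simple t := by
          rw [hww, mul_assoc, hcomm, mul_assoc]
        have l1 := cs.length_mul_simple (w' * cs.simple s) t
        rw [← e] at l1
        have l2 := cs.length_mul_simple w' s
        omega
      · rw [hww, mulap, h3 t s hm, map_add, map_add]
        rcases cs.length_mul_simple w' s with l | l
        · have a1 := ih _ (by omega) w' rfl t hup
          have a2 := ih _ (by omega) w' rfl s (by omega)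
          omega
        · obtain ⟨w'', hw''⟩ : ∃ w'', w'' = w' * cs.simple s := ⟨_, rfl⟩
          have hww' : w' = w'' * cs.simple s := by rw [hw'']; simp
          rw [← hw''] at l
          have hm' : M s t = 3 := by rw [M.isSymm.apply t s]; exact hm
          have a1 : ρ w' (α t) = ρ w'' (α s) + ρ w'' (α t) := by
            rw [hww', mulap, h3 s t hm', map_add]
          have a2 : ρ w' (α s) = -ρ w'' (α s) := by
            rw [hww', mulap, h1, map_neg]
          rw [a1, a2, map_add, map_neg]
          have a3 := ih _ (by omega) w'' rfl t (by
            have hbr : cs.simple s * cs.simple t * cs.simple s =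
                cs.simple t * cs.simple s * cs.simple t := by
              rw [hm] at hb
              have e3 : (cs.simple t * cs.simple s * cs.simple t) *
                (cs.simple s * cs.simple t * cs.simple s) = 1 := by
                rw [← hb]; simp only [pow_succ, pow_zero, one_mul, mul_assoc]
              have := eq_inv_of_mul_eq_one_right e3
              simpa [mul_assoc] using this
            have e : w * cs.simple s = w'' * cs.simple t * cs.simple s * cs.simple t := by
              rw [hww, hww', mul_assoc, mul_assoc, ← mul_assoc (cs.simple s), hbr]
              simp only [mul_assoc]
            have l1 := cs.length_mul_simple (w'' * cs.simple t * cs.simple s) t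
            rw [← e] at l1
            have l2 := cs.length_mul_simple (w'' * cs.simple t) s
            have l3 := cs.length_mul_simple w'' t
            omega)
          omega
  by_contra hne
  obtain ⟨s, hs⟩ := cs.exists_rightDescent_of_ne_one hne
  rw [cs.isRightDescent_iff] at hs
  have h := key _ (w * cs.simple s) rfl s (by simp; omega)
  rw [mulap, h1, hw, AddMonoid.End.coe_one, id, map_neg] at h
  have := hL s
  omega

end Tits
end EisProof

open Matrix
namespace EisProof
set_option linter.unusedSimpArgs false

/-- The twisted automorphism. -/
def sd : MulAut Gm := sg * dl
theorem sd_sd : sd * sd = 1 := sd_sq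
theorem sd_mk (A : SL) : sd (mk A) = mk (fs (fd A)) := rfl

/-- The extension. -/
abbrev G1 : Type := SD sd sd_sd

/-- Matrix space. -/
abbrev VV : Type := Matrix (Fin 2) (Fin 2) EE

/-- The Hermitian type action. -/
def actE : SL →* AddMonoid.End VV where
  toFun A := { toFun := fun X => cm A * X * (cm A)ᴴ
               map_zero' := by simp
               map_add' := fun X Y => by rw [mul_add, add_mul] }
  map_one' := by
    ext1 X; show cm 1 * X * (cm 1)ᴴ = X
    rw [cm_one]; simp
  map_mul' A B := by
    ext1 X
    show cm (A * B) * X * (cm (A * B))ᴴ = cm A * (cm B * X * (cm B)ᴴ) * (cm A)ᴴ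
    rw [cm_mul, conjTranspose_mul]; simp only [mul_assoc]

theorem actE_app (A : SL) (X : VV) : actE A X = cm A * X * (cm A)ᴴ := rfl

/-- The action of the quotient. -/
def actG : Gm →* (AddMonoid.End VV)ˣ :=
  QuotientGroup.lift _ actE.toHomUnits (by
    intro A hA
    rw [MonoidHom.mem_ker]
    apply Units.ext
    rw [MonoidHom.coe_toHomUnits]
    rcases mem_center.mp hA with rfl | rfl
    · rw [map_one]; rfl
    · ext1 X
      show cm (-1) * X * (cm (-1))ᴴ = X
      have : cm (-1) = -1 := by
        rw [← cm_one]; apply Matrix.ext; intro i j; simp [cm_app, cm]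
      rw [this]; simp)

theorem actG_mk (A : SL) : ((actG (mk A) : (AddMonoid.End VV)ˣ) : AddMonoid.End VV) = actE A := rfl

/-- The map for the involution. -/
def tE : AddMonoid.End VV where
  toFun X := !![star (X 0 0), -star (X 0 1); -star (X 1 0), star (X 1 1)]
  map_zero' := by
    apply Matrix.ext; intro i j; fin_cases i <;> fin_cases j <;> simp
  map_add' X Y := by
    apply Matrix.ext; intro i j; fin_cases i <;> fin_cases j <;> simp [add_comm]

theorem tE_app (X : VV) : tE X = !![star (X 0 0), -star (X 0 1); -star (X 1 0), star (X 1 1)] := rfl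

theorem tE_sq : tE * tE = 1 := by
  ext1 X; show tE (tE X) = X
  apply Matrix.ext; intro i j; fin_cases i <;> fin_cases j <;> simp [tE_app]

/-- The involution as a unit. -/
def tU : (AddMonoid.End VV)ˣ := ⟨tE, tE, tE_sq, tE_sq⟩

theorem tE_act (A : SL) : tE * actE A = actE (fs (fd A)) * tE := by
  ext1 X
  show tE (cm A * X * (cm A)ᴴ) = cm (fs (fd A)) * (tE X) * (cm (fs (fd A)))ᴴ
  apply Matrix.ext; intro i j; fin_cases i <;> fin_cases j <;>
    simp [tE_app, Matrix.mul_apply, Fin.sum_univ_two, cm_app, fs, fd] <;> ring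

/-- The action of the extension. -/
def act1 : G1 →* (AddMonoid.End VV)ˣ :=
  liftSD sd sd_sd actG tU (Units.ext tE_sq) (by
    intro x
    obtain ⟨A, rfl⟩ := mk_surj x
    rw [mul_inv_eq_iff_eq_mul]
    apply Units.ext
    exact tE_act A)

theorem act1_gen (A : SL) (X : VV) :
    ((act1 (il sd sd_sd (mk A) * tt sd sd_sd) : (AddMonoid.End VV)ˣ) : AddMonoid.End VV) X =
      cm A * tE X * (cm A)ᴴ := by
  rw [map_mul, act1, liftSD_il, liftSD_tt]
  rfl

/-- Generator matrices. -/
def gA : Fin 4 → SL := ![S0, D0⁻¹, D0, T 1]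
/-- Reflections. -/
def rf (i : Fin 4) : G1 := il sd sd_sd (mk (gA i)) * tt sd sd_sd

theorem rf_mul (i j : Fin 4) : rf i * rf j = il sd sd_sd (mk (gA i * fs (fd (gA j)))) := by
  rw [rf, rf, mul_assoc, ← mul_assoc (tt sd sd_sd), tt_comm, mul_assoc, tt_sq, mul_one, ← map_mul,
    sd_mk, ← map_mul]

theorem rf_pow (i j : Fin 4) (n : ℕ)
    (h : (gA i * fs (fd (gA j))) ^ n = 1 ∨ (gA i * fs (fd (gA j))) ^ n = -1) :
    (rf i * rf j) ^ n = 1 := by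
  rw [rf_mul, ← map_pow, ← map_pow, mk_eq_one.mpr h, map_one]

theorem rf_rel : ∀ r ∈ lambda1Rels, FreeGroup.lift rf r = 1 := by
  intro r hr
  simp only [lambda1Rels, Set.mem_insert_iff, Set.mem_singleton_iff] at hr
  rcases hr with rfl | rfl | rfl | rfl | rfl | rfl | rfl | rfl | rfl | rfl <;>
    simp only [map_pow, map_mul, FreeGroup.lift_apply_of]
  · rw [sq]; simpa using rf_pow 0 0 1 (by decide)
  · rw [sq]; simpa using rf_pow 1 1 1 (by decide)
  · rw [sq]; simpa using rf_pow 2 2 1 (by decide)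
  · rw [sq]; simpa using rf_pow 3 3 1 (by decide)
  · exact rf_pow _ _ _ (by decide)
  · exact rf_pow _ _ _ (by decide)
  · exact rf_pow _ _ _ (by decide)
  · exact rf_pow _ _ _ (by decide)
  · exact rf_pow _ _ _ (by decide)
  · exact rf_pow _ _ _ (by decide)

/-- The map from the Coxeter group. -/
def f1 : Lambda1 →* G1 := PresentedGroup.toGroup rf_rel

theorem f1_of (i : Fin 4) : f1 (PresentedGroup.of i) = rf i := PresentedGroup.toGroup.of rf_rel

theorem f1_surj : Function.Surjective f1 := by
  rw [← MonoidHom.range_eq_top]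
  have hr : ∀ i, rf i ∈ f1.range := fun i => ⟨_, f1_of i⟩
  have hm : ∀ i j, il sd sd_sd (mk (gA i * fs (fd (gA j)))) ∈ f1.range := fun i j => by
    rw [← rf_mul]; exact mul_mem (hr i) (hr j)
  have hD : il sd sd_sd (mk D0) ∈ f1.range := by
    have := hm 1 2
    rwa [show gA 1 * fs (fd (gA 2)) = D0 by decide] at this
  have ht : tt sd sd_sd ∈ f1.range := by
    have := mul_mem (inv_mem hD) (hr 2)
    simpa [rf, gA] using this
  have hg : ∀ i, il sd sd_sd (mk (gA i)) ∈ f1.range := fun i => by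
    have := mul_mem (hr i) (inv_mem ht)
    simpa [rf] using this
  have hK := gen (f1.range.comap ((il sd sd_sd).comp mk)) (hg 0) (hg 3) hD
  rw [eq_top_iff]
  intro x _
  have hil : ∀ h, il sd sd_sd h ∈ f1.range := by
    intro h
    obtain ⟨A, rfl⟩ := mk_surj h
    have : A ∈ f1.range.comap ((il sd sd_sd).comp mk) := by rw [hK]; trivial
    exact this
  rcases sd_cases sd sd_sd x with ⟨h, rfl⟩ | ⟨h, rfl⟩
  · exact hil h
  · exact mul_mem (hil h) ht

/-- The Coxeter matrix. -/
def m1 : Fin 4 → Fin 4 → ℕ := ![![1, 2, 2, 3], ![2, 1, 3, 3], ![2, 3, 1, 3], ![3, 3, 3, 1]]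

/-- The Coxeter matrix. -/
def M1 : CoxeterMatrix (Fin 4) where
  M := Matrix.of m1
  isSymm := by decide
  diagonal := by
    show ∀ i, m1 i i = 1
    decide
  off_diagonal := by
    show ∀ i j, i ≠ j → m1 i j ≠ 1
    decide

theorem m1_symm : ∀ i j, m1 i j = m1 j i := by decide
theorem M1_app (i j : Fin 4) : M1.M i j = m1 i j := rfl

/-- The simple roots. -/
def rt : Fin 4 → VV :=
  ![!![-1, 0; 0, 1], !![0, om ^ 2; om, 0], !![0, om; om ^ 2, 0], !![1, 1; 1, 0]]

/-- Height functional. -/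
def ht1 : VV →+ ℤ where
  toFun X := 4 * (X 1 1).re + 3 * (X 0 0).re - 2 * (X 0 1).re + (X 0 1).im
  map_zero' := by simp
  map_add' X Y := by simp; ring

theorem l1_rel (r) (h : r ∈ lambda1Rels) : PresentedGroup.mk lambda1Rels r = 1 :=
  PresentedGroup.one_of_mem h

theorem m1_lift : M1.IsLiftable (fun i => (PresentedGroup.of i : Lambda1)) := by
  have hs : ∀ i, (PresentedGroup.of i : Lambda1) * PresentedGroup.of i = 1 := by
    intro i
    rw [← sq]
    exact l1_rel (FreeGroup.of i ^ 2) (by fin_cases i <;> simp [lambda1Rels])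
  have flip : ∀ (a b : Lambda1) (n : ℕ), a * a = 1 → b * b = 1 → (a * b) ^ n = 1 →
      (b * a) ^ n = 1 := by
    intro a b n ha hb h
    have : b * a = (a * b)⁻¹ := by
      rw [_root_.mul_inv_rev, inv_eq_of_mul_eq_one_left ha, inv_eq_of_mul_eq_one_left hb]
    rw [this, inv_pow, h, inv_one]
  have hlt : ∀ i j, i < j → ((PresentedGroup.of i : Lambda1) * PresentedGroup.of j) ^ m1 i j = 1 := by
    intro i j hij
    have : (FreeGroup.of i * FreeGroup.of j) ^ m1 i j ∈ lambda1Rels := by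
      fin_cases i <;> fin_cases j <;> simp at hij <;> simp [lambda1Rels, m1]
    exact l1_rel _ this
  intro i j
  show ((PresentedGroup.of i : Lambda1) * PresentedGroup.of j) ^ m1 i j = 1
  rcases lt_trichotomy i j with h | h | h
  · exact hlt i j h
  · subst h; rw [← M1_app, M1.diagonal, pow_one, hs]
  · rw [m1_symm]
    exact flip _ _ _ (hs j) (hs i) (hlt j i h)

theorem f1_inj : Function.Injective f1 := by
  let cs := M1.toCoxeterSystem
  let a : M1.Group →* Lambda1 := cs.lift ⟨_, m1_lift⟩
  have ha : ∀ i, a (cs.simple i) = PresentedGroup.of i := fun i => cs.lift_apply_simple m1_lift i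
  have hasurj : Function.Surjective a := by
    rw [← MonoidHom.range_eq_top, eq_top_iff, ← PresentedGroup.closure_range_of,
      Subgroup.closure_le]
    rintro _ ⟨i, rfl⟩
    exact ⟨_, ha i⟩
  let ρ : M1.Group →* AddMonoid.End VV := (Units.coeHom _).comp (act1.comp (f1.comp a))
  have hρ : ∀ i X, ρ (cs.simple i) X = cm (gA i) * tE X * (cm (gA i))ᴴ := by
    intro i X
    show ((act1 (f1 (a (cs.simple i))) : (AddMonoid.End VV)ˣ) : AddMonoid.End VV) X = _
    rw [ha, f1_of, rf, act1_gen]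
  rw [injective_iff_map_eq_one]
  intro k hk
  obtain ⟨w, rfl⟩ := hasurj k
  have : w = 1 := by
    refine tits cs ρ rt ht1 ?_ ?_ ?_ ?_ ?_ w ?_
    · show ∀ i j, i ≠ j → m1 i j = 2 ∨ m1 i j = 3
      decide
    · simp only [hρ, tE_app]; decide
    · simp only [hρ, tE_app, M1_app]; decide
    · simp only [hρ, tE_app, M1_app]; decide
    · show ∀ i, 0 < 4 * (rt i 1 1).re + 3 * (rt i 0 0).re - 2 * (rt i 0 1).re + (rt i 0 1).im
      decide
    · show ((act1 (f1 (a w)) : (AddMonoid.End VV)ˣ) : AddMonoid.End VV) = 1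
      rw [hk, map_one]; rfl
  rw [this, map_one]

/-- The isomorphism for the first group. -/
noncomputable def e1 : Lambda1 ≃* G1 := MulEquiv.ofBijective f1 ⟨f1_inj, f1_surj⟩

theorem e1_of (i : Fin 4) : e1 (PresentedGroup.of i) = rf i := f1_of i

end EisProof

open Matrix
namespace EisProof
set_option linter.unusedSimpArgs false

theorem sd_mul {N : Type*} [Group N] (θ : MulAut N) (hθ : θ * θ = 1) (a b : N) :
    (il θ hθ a * tt θ hθ) * (il θ hθ b * tt θ hθ) = il θ hθ (a * θ b) := by
  rw [mul_assoc, ← mul_assoc (tt θ hθ), tt_comm, mul_assoc, tt_sq, mul_one, ← map_mul]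

/-- Generators of the second group. -/
def lx : Lambda2 := PresentedGroup.of 0
/-- Generators of the second group. -/
def ly : Lambda2 := PresentedGroup.of 1
/-- Generators of the second group. -/
def lz : Lambda2 := PresentedGroup.of 2

theorem l2_rel (r) (h : r ∈ lambda2Rels) : PresentedGroup.mk lambda2Rels r = 1 :=
  PresentedGroup.one_of_mem h

theorem lx2 : lx * lx = 1 := by
  rw [← sq]; exact l2_rel (FreeGroup.of 0 ^ 2) (by simp [lambda2Rels])
theorem ly2 : ly * ly = 1 := by
  rw [← sq]; exact l2_rel (FreeGroup.of 1 ^ 2) (by simp [lambda2Rels])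
theorem lz3 : lz ^ 3 = 1 := l2_rel (FreeGroup.of 2 ^ 3) (by simp [lambda2Rels])
theorem lzy' : lz * ly * lz⁻¹ * ly = 1 :=
  l2_rel (FreeGroup.of 2 * FreeGroup.of 1 * (FreeGroup.of 2)⁻¹ * FreeGroup.of 1)
    (by simp [lambda2Rels])
theorem lzx3 : (lz * lx) ^ 3 = 1 :=
  l2_rel ((FreeGroup.of 2 * FreeGroup.of 0) ^ 3) (by simp [lambda2Rels])
theorem lxy6 : (lx * ly) ^ 6 = 1 :=
  l2_rel ((FreeGroup.of 0 * FreeGroup.of 1) ^ 6) (by simp [lambda2Rels])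
theorem lxi : lx⁻¹ = lx := inv_eq_of_mul_eq_one_left lx2
theorem lyi : ly⁻¹ = ly := inv_eq_of_mul_eq_one_left ly2
theorem lzy : lz * ly = ly * lz := by
  have := lzy'
  have h := eq_inv_of_mul_eq_one_left this
  rw [lyi, mul_inv_eq_iff_eq_mul] at h
  exact h
theorem lxz3 : (lx * lz) ^ 3 = 1 := by
  have : (lx * lz) ^ 3 = lz⁻¹ * (lz * lx) ^ 3 * lz := by
    simp only [pow_succ, pow_zero, one_mul]; group
  rw [this, lzx3]; group

theorem toG2 {G : Type*} [Group G] (f : Fin 3 → G) (h1 : f 0 * f 0 = 1) (h2 : f 1 * f 1 = 1)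
    (h3 : f 2 ^ 3 = 1) (h4 : f 2 * f 1 = f 1 * f 2) (h5 : (f 2 * f 0) ^ 3 = 1)
    (h6 : (f 0 * f 1) ^ 6 = 1) : ∀ r ∈ lambda2Rels, FreeGroup.lift f r = 1 := by
  intro r hr
  simp only [lambda2Rels, Set.mem_insert_iff, Set.mem_singleton_iff] at hr
  rcases hr with rfl | rfl | rfl | rfl | rfl | rfl <;>
    simp only [map_pow, map_mul, map_inv, FreeGroup.lift_apply_of]
  · rw [sq, h1]
  · rw [sq, h2]
  · exact h3
  · rw [h4, mul_inv_cancel_right, h2]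
  · exact h5
  · exact h6

theorem hom2_ext {G : Type*} [Group G] {f g : Lambda2 →* G} (hx : f lx = g lx) (hy : f ly = g ly)
    (hz : f lz = g lz) : f = g := by
  apply PresentedGroup.ext
  intro i
  fin_cases i
  · exact hx
  · exact hy
  · exact hz

theorem th_rel : ∀ r ∈ lambda2Rels, FreeGroup.lift ![lx, ly, lz⁻¹] r = 1 := by
  apply toG2
  · exact lx2
  · exact ly2
  · show lz⁻¹ ^ 3 = 1
    rw [inv_pow, lz3, inv_one]
  · show lz⁻¹ * ly = ly * lz⁻¹
    rw [inv_mul_eq_iff_eq_mul, ← mul_assoc, lzy, mul_inv_cancel_right]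
  · show (lz⁻¹ * lx) ^ 3 = 1
    have : lz⁻¹ * lx = (lx * lz)⁻¹ := by rw [_root_.mul_inv_rev, lxi]
    rw [this, inv_pow, lxz3, inv_one]
  · exact lxy6

/-- The involution as homomorphism. -/
def thH : Lambda2 →* Lambda2 := PresentedGroup.toGroup th_rel
theorem thH_x : thH lx = lx := PresentedGroup.toGroup.of th_rel
theorem thH_y : thH ly = ly := PresentedGroup.toGroup.of th_rel
theorem thH_z : thH lz = lz⁻¹ := PresentedGroup.toGroup.of th_rel
theorem thH_sq : thH.comp thH = MonoidHom.id _ := by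
  apply hom2_ext <;> simp [thH_x, thH_y, thH_z]

/-- The involution. -/
def th : MulAut Lambda2 := MonoidHom.toMulEquiv thH thH thH_sq thH_sq
theorem th_x : th lx = lx := thH_x
theorem th_y : th ly = ly := thH_y
theorem th_z : th lz = lz⁻¹ := thH_z
theorem th_sq : th * th = 1 := by
  ext a
  exact congrArg (fun f : Lambda2 →* Lambda2 => f a) thH_sq

/-- The auxiliary group. -/
abbrev E2 : Type := SD th th_sq

/-- Left parts of the reflections. -/
def aa : Fin 4 → Lambda2 := ![1, lx, ly * lx * ly, lz⁻¹]
/-- Reflections in the auxiliary group. -/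
def ra (i : Fin 4) : E2 := il th th_sq (aa i) * tt th th_sq

theorem ra_pow (i j : Fin 4) (n : ℕ) (h : (aa i * th (aa j)) ^ n = 1) : (ra i * ra j) ^ n = 1 := by
  rw [ra, ra, sd_mul, ← map_pow, h, map_one]

theorem yxy2 : (ly * lx * ly) * (ly * lx * ly) = 1 := by
  have : (ly * lx * ly) * (ly * lx * ly) = ly * lx * (ly * ly) * lx * ly := by group
  rw [this, ly2, mul_one, mul_assoc ly, lx2, mul_one, ly2]

theorem ra_rel : ∀ r ∈ lambda1Rels, FreeGroup.lift ra r = 1 := by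
  intro r hr
  simp only [lambda1Rels, Set.mem_insert_iff, Set.mem_singleton_iff] at hr
  have s : ∀ i, aa i * th (aa i) = 1 → ra i ^ 2 = 1 := by
    intro i h
    rw [sq]
    have := ra_pow i i 1 (by rw [pow_one, h])
    simpa using this
  rcases hr with rfl | rfl | rfl | rfl | rfl | rfl | rfl | rfl | rfl | rfl <;>
    simp only [map_pow, map_mul, FreeGroup.lift_apply_of]
  · apply s; simp [aa]
  · apply s; simp [aa, th_x, lx2]
  · apply s
    show (ly * lx * ly) * th (ly * lx * ly) = 1
    rw [map_mul, map_mul, th_x, th_y, yxy2]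
  · apply s; simp [aa, th_z]
  · apply ra_pow; simp [aa, th_x, sq, lx2]
  · apply ra_pow
    show (1 * th (ly * lx * ly)) ^ 2 = 1
    rw [map_mul, map_mul, th_x, th_y, one_mul, sq, yxy2]
  · apply ra_pow; simp [aa, th_z, lz3]
  · apply ra_pow
    show (lx * th (ly * lx * ly)) ^ 3 = 1
    rw [map_mul, map_mul, th_x, th_y, ← lxy6]
    simp only [pow_succ, pow_zero, one_mul, mul_assoc]
  · apply ra_pow; simp [aa, th_z, lxz3]
  · apply ra_pow
    show (ly * lx * ly * th lz⁻¹) ^ 3 = 1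
    rw [map_inv, th_z, inv_inv]
    have : ly * lx * ly * lz = ly * (lx * lz) * ly⁻¹ := by
      rw [lyi, mul_assoc, ← lzy]; simp only [mul_assoc]
    rw [this, conj_pow, lxz3]; group

/-- Map to the auxiliary group. -/
def j1 : Lambda1 →* E2 := PresentedGroup.toGroup ra_rel
theorem j1_of (i : Fin 4) : j1 (PresentedGroup.of i) = ra i := PresentedGroup.toGroup.of ra_rel

/-- Map of the projective group to the auxiliary group. -/
noncomputable def jj : Gm →* E2 := (j1.comp e1.symm.toMonoidHom).comp (il sd sd_sd)

theorem jj_mk (i j : Fin 4) : jj (mk (gA i * fs (fd (gA j)))) = il th th_sq (aa i * th (aa j)) := by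
  have : e1.symm (il sd sd_sd (mk (gA i * fs (fd (gA j))))) =
      PresentedGroup.of i * PresentedGroup.of j := by
    rw [← rf_mul, MulEquiv.symm_apply_eq, map_mul, e1_of, e1_of]
  show j1 (e1.symm (il sd sd_sd (mk (gA i * fs (fd (gA j)))))) = _
  rw [this, map_mul, j1_of, j1_of, ra, ra, sd_mul]

theorem jj_P : jj (mk P0) = il th th_sq lz := by
  have := jj_mk 0 3
  rw [show gA 0 * fs (fd (gA 3)) = -P0 by decide, mk_neg] at this
  rw [this]; simp [aa, th_z]
theorem jj_R : jj (mk R0) = il th th_sq (lx * lz) := by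
  have := jj_mk 1 3
  rw [show gA 1 * fs (fd (gA 3)) = R0 by decide] at this
  rw [this]; simp [aa, th_z]
theorem jj_Q : jj (mk Q0) = il th th_sq (ly * lx * ly * lz) := by
  have := jj_mk 2 3
  rw [show gA 2 * fs (fd (gA 3)) = Q0 by decide] at this
  rw [this]; simp [aa, th_z]

theorem jj_conj (h : Gm) :
    il th th_sq ly * jj h * (il th th_sq ly)⁻¹ = jj (sg h) := by
  have key : (MulAut.conj (il th th_sq ly)).toMonoidHom.comp (jj.comp mk) =
      (jj.comp sg.toMonoidHom).comp mk := by
    suffices hs : MonoidHom.eqLocus ((MulAut.conj (il th th_sq ly)).toMonoidHom.comp (jj.comp mk))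
        ((jj.comp sg.toMonoidHom).comp mk) = ⊤ from
      MonoidHom.ext fun A => (hs ▸ Subgroup.mem_top A : A ∈ MonoidHom.eqLocus _ _)
    apply genPQR
    · show il th th_sq ly * jj (mk P0) * (il th th_sq ly)⁻¹ = jj (mk (fs P0))
      rw [show fs P0 = P0 by decide, jj_P, ← map_inv, ← map_mul, ← map_mul, ← lzy,
        mul_inv_cancel_right]
    · show il th th_sq ly * jj (mk Q0) * (il th th_sq ly)⁻¹ = jj (mk (fs Q0))
      rw [show fs Q0 = R0 by decide, jj_Q, jj_R, ← map_inv, ← map_mul, ← map_mul]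
      congr 1
      have : ly * (ly * lx * ly * lz) * ly⁻¹ = (ly * ly) * lx * (ly * lz) * ly⁻¹ := by
        simp only [mul_assoc]
      rw [this, ly2, ← lzy]; group
    · show il th th_sq ly * jj (mk R0) * (il th th_sq ly)⁻¹ = jj (mk (fs R0))
      rw [show fs R0 = Q0 by decide, jj_Q, jj_R, ← map_inv, ← map_mul, ← map_mul]
      congr 1
      rw [lyi, mul_assoc, mul_assoc lx, lzy]; simp only [mul_assoc]
  obtain ⟨A, rfl⟩ := mk_surj h
  exact congrArg (fun f : SL →* E2 => f A) key

/-- The extension by complex conjugation. -/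
abbrev G2 : Type := SD sg sg_sq

/-- Images of the generators. -/
def gB : Fin 3 → G2 :=
  ![il sg sg_sq (mk (P0 * R0⁻¹)), tt sg sg_sq, il sg sg_sq (mk P0)]

theorem gB_rel : ∀ r ∈ lambda2Rels, FreeGroup.lift gB r = 1 := by
  have hp : ∀ (A : SL) (n : ℕ), A ^ n = 1 ∨ A ^ n = -1 → (il sg sg_sq (mk A)) ^ n = 1 := by
    intro A n h
    rw [← map_pow, ← map_pow, mk_eq_one.mpr h, map_one]
  apply toG2
  · rw [← sq]; exact hp _ 2 (by decide)
  · exact tt_sq _ _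
  · exact hp _ 3 (by decide)
  · show il sg sg_sq (mk P0) * tt sg sg_sq = tt sg sg_sq * il sg sg_sq (mk P0)
    rw [tt_comm, sg_mk, show fs P0 = P0 by decide]
  · show (il sg sg_sq (mk P0) * il sg sg_sq (mk (P0 * R0⁻¹))) ^ 3 = 1
    rw [← map_mul, ← map_mul]
    exact hp _ 3 (by decide)
  · show (il sg sg_sq (mk (P0 * R0⁻¹)) * tt sg sg_sq) ^ (2 * 3) = 1
    rw [pow_mul, sq, sd_mul, sg_mk, ← map_mul]
    exact hp _ 3 (by decide)

/-- The map from the second group. -/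
def f2 : Lambda2 →* G2 := PresentedGroup.toGroup gB_rel
theorem f2_x : f2 lx = il sg sg_sq (mk (P0 * R0⁻¹)) := PresentedGroup.toGroup.of gB_rel
theorem f2_y : f2 ly = tt sg sg_sq := PresentedGroup.toGroup.of gB_rel
theorem f2_z : f2 lz = il sg sg_sq (mk P0) := PresentedGroup.toGroup.of gB_rel

theorem f2_inj : Function.Injective f2 := by
  let F : G2 →* E2 := liftSD sg sg_sq jj (il th th_sq ly) (by rw [← map_mul, ly2, map_one]) jj_conj
  have hF : F.comp f2 = il th th_sq := by
    apply hom2_ext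
    · rw [MonoidHom.comp_apply, f2_x]
      show liftSD _ _ _ _ _ _ _ = _
      rw [liftSD_il, map_mul, map_inv, map_mul, map_inv, jj_P, jj_R, ← map_inv, ← map_mul]
      congr 1
      rw [_root_.mul_inv_rev, mul_inv_cancel_left, lxi]
    · rw [MonoidHom.comp_apply, f2_y]
      exact liftSD_tt ..
    · rw [MonoidHom.comp_apply, f2_z]
      show liftSD _ _ _ _ _ _ _ = _
      rw [liftSD_il, jj_P]
  have : Function.Injective (F.comp f2) := by rw [hF]; exact il_inj _ _
  exact Function.Injective.of_comp (f := F) this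

theorem f2_surj : Function.Surjective f2 := by
  rw [← MonoidHom.range_eq_top]
  have ht : tt sg sg_sq ∈ f2.range := ⟨_, f2_y⟩
  have hP : il sg sg_sq (mk P0) ∈ f2.range := ⟨_, f2_z⟩
  have hX : il sg sg_sq (mk (P0 * R0⁻¹)) ∈ f2.range := ⟨_, f2_x⟩
  have hR : il sg sg_sq (mk R0) ∈ f2.range := by
    have := mul_mem (inv_mem hX) hP
    simpa using this
  have hQ : il sg sg_sq (mk Q0) ∈ f2.range := by
    have := mul_mem (mul_mem ht hR) (inv_mem ht)
    rwa [tt_conj, sg_mk, show fs R0 = Q0 by decide] at this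
  have hK := genPQR (f2.range.comap ((il sg sg_sq).comp mk)) hP hQ hR
  rw [eq_top_iff]
  intro x _
  have hil : ∀ h, il sg sg_sq h ∈ f2.range := by
    intro h
    obtain ⟨A, rfl⟩ := mk_surj h
    have : A ∈ f2.range.comap ((il sg sg_sq).comp mk) := by rw [hK]; trivial
    exact this
  rcases sd_cases sg sg_sq x with ⟨h, rfl⟩ | ⟨h, rfl⟩
  · exact hil h
  · exact mul_mem (hil h) ht

/-- The isomorphism for the second group. -/
noncomputable def e2 : Lambda2 ≃* G2 := MulEquiv.ofBijective f2 ⟨f2_inj, f2_surj⟩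

end EisProof

/-- Any group containing `PSL(2, ℤ[ω])` as a subgroup of index 2 is isomorphic
to `PGL(2, ℤ[ω])`, `Λ₁`, `Λ₂`, or `PSL(2, ℤ[ω]) × ℤ/2ℤ`. -/
theorem up_from_bianchi_by_index_two (Δ : Type) [Group Δ] (H : Subgroup Δ)
    (hH : H.index = 2) (hiso : Nonempty (H ≃* PSL2 Eisenstein)) :
    Nonempty (Δ ≃* PGL2 Eisenstein) ∨ Nonempty (Δ ≃* Lambda1) ∨
      Nonempty (Δ ≃* Lambda2) ∨
      Nonempty (Δ ≃* PSL2 Eisenstein × Multiplicative (ZMod 2)) := by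
  obtain ⟨r⟩ := EisProof.exists_ringEquiv
  obtain ⟨p⟩ := EisProof.psl_congr r
  obtain ⟨q⟩ := EisProof.pgl_congr r
  obtain ⟨i⟩ := hiso
  obtain ⟨θ, h4, ⟨f⟩⟩ := EisProof.ext_class H hH (i.trans p)
  rcases id h4 with rfl | rfl | rfl | rfl
  · obtain ⟨g⟩ := EisProof.prod_equiv
    exact Or.inr (Or.inr (Or.inr ⟨(f.symm.trans g).trans (p.symm.prodCongr (MulEquiv.refl _))⟩))
  · obtain ⟨g⟩ := EisProof.pgl_equiv
    exact Or.inl ⟨(f.symm.trans g).trans q.symm⟩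
  · exact Or.inr (Or.inr (Or.inl ⟨f.symm.trans EisProof.e2.symm⟩))
  · exact Or.inr (Or.inl ⟨f.symm.trans EisProof.e1.symm⟩)
end

section
/- Let Γ = PSL(2, ℤ[ω]) and let Ω be a proper normal subgroup of Γ containing a nontrivial element of finite order. Then either Ω is the commutator subgroup of Γ (which has index 3), or Ω has index 12 in Γ and equals the kernel of the reduction homomorphism Γ → PSL(2, ℤ[ω]/𝔭), where 𝔭 is the prime ideal of ℤ[ω] generated by 2ω+1 = √(-3) (the unique prime above 3). -/
/-- Applying a ring homomorphism entrywise maps the center of `SL(2,R)` into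
the center of `SL(2,S)`. -/
lemma center_le_comap_slMap {R S : Type*} [CommRing R] [CommRing S] (f : R →+* S) :
    Subgroup.center (Matrix.SpecialLinearGroup (Fin 2) R) ≤
      (Subgroup.center (Matrix.SpecialLinearGroup (Fin 2) S)).comap
        (Matrix.SpecialLinearGroup.map f) := by
  intro A hA
  rw [Subgroup.mem_comap, Matrix.SpecialLinearGroup.mem_center_iff]
  obtain ⟨r, hr, hrA⟩ := Matrix.SpecialLinearGroup.mem_center_iff.mp hA
  refine ⟨f r, by rw [← map_pow, hr, map_one], ?_⟩
  ext i j
  simp [← hrA, Matrix.scalar_apply, Matrix.diagonal_apply]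
  aesop

/-- The homomorphism `PSL(2,R) → PSL(2,S)` induced by applying a ring
homomorphism `f : R → S` entrywise. -/
def PSL2Map {R S : Type*} [CommRing R] [CommRing S] (f : R →+* S) :
    PSL2 R →* PSL2 S :=
  QuotientGroup.map _ _ (Matrix.SpecialLinearGroup.map f) (center_le_comap_slMap f)


section PA

theorem hexreal (x y : ℝ) : ∃ m n : ℤ, (x+m)^2-(x+m)*(y+n)+(y+n)^2 ≤ 1/3 := by
  have hu0 := Int.fract_nonneg x
  have hu1 := (Int.fract_lt_one x).le
  have hv0 := Int.fract_nonneg y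
  have hv1 := (Int.fract_lt_one y).le
  have hx : ∀ k : ℤ, x + ((-⌊x⌋ + k : ℤ) : ℝ) = Int.fract x + k := by
    intro k; push_cast; rw [Int.fract]; ring
  have hy : ∀ k : ℤ, y + ((-⌊y⌋ + k : ℤ) : ℝ) = Int.fract y + k := by
    intro k; push_cast; rw [Int.fract]; ring
  by_contra! h
  have h1 := h (-⌊x⌋ + 0) (-⌊y⌋ + 0)
  have h2 := h (-⌊x⌋ + (-1)) (-⌊y⌋ + (-1))
  have h3 := h (-⌊x⌋ + (-1)) (-⌊y⌋ + 0)
  have h4 := h (-⌊x⌋ + 0) (-⌊y⌋ + (-1))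
  rw [hx, hy] at h1 h2 h3 h4
  generalize Int.fract x = u at *
  generalize Int.fract y = v at *
  push_cast at h1 h2 h3 h4
  rcases le_total v u with h' | h'
  · have e1 := mul_nonneg (sub_nonneg.2 hu1) (sub_nonneg.2 h1.le)
    have e2 := mul_nonneg hv0 (sub_nonneg.2 h2.le)
    have e3 := mul_nonneg (sub_nonneg.2 h') (sub_nonneg.2 h3.le)
    nlinarith [sq_nonneg (u-2/3), sq_nonneg (v-1/3), sq_nonneg (u - 2/3 - (v-1/3)), sq_nonneg (u-2*v), sq_nonneg (2*u-v-1)]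
  · have e1 := mul_nonneg (sub_nonneg.2 hv1) (sub_nonneg.2 h1.le)
    have e2 := mul_nonneg hu0 (sub_nonneg.2 h2.le)
    have e3 := mul_nonneg (sub_nonneg.2 h') (sub_nonneg.2 h4.le)
    nlinarith [sq_nonneg (v-2/3), sq_nonneg (u-1/3), sq_nonneg (v - 2/3 - (u-1/3)), sq_nonneg (v-2*u), sq_nonneg (2*v-u-1)]

theorem wfacts (w : ℂ) (hw : w^2+w+1=0) : w.re = -1/2 ∧ w.im^2 = 3/4 := by
  have h1 := congrArg Complex.re hw
  have h2 := congrArg Complex.im hw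
  simp [pow_two] at h1 h2
  have : w.im * (2*w.re+1) = 0 := by linarith
  rcases mul_eq_zero.1 this with h | h
  · rw [h] at h1; nlinarith [sq_nonneg (w.re+1/2)]
  · have : w.re = -1/2 := by linarith
    refine ⟨this, ?_⟩
    rw [this] at h1; linarith

/-- working hypotheses -/
structure Eis {R : Type*} [CommRing R] (ω : R) (σ : R →+* ℂ) : Prop where
  hω : ω^2+ω+1=0
  rep : ∀ z : R, ∃ m n : ℤ, z = m + n * ω
  inj : Function.Injective σ

section
variable {R : Type*} [CommRing R] {ω : R} {σ : R →+* ℂ}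

theorem Eis.hw (E : Eis ω σ) : (σ ω)^2 + σ ω + 1 = 0 := by
  have := congrArg σ E.hω
  simpa using this

theorem Eis.nsq (E : Eis ω σ) (x y : ℝ) :
    Complex.normSq (x + y * σ ω) = x^2-x*y+y^2 := by
  obtain ⟨h1, h2⟩ := wfacts _ E.hw
  rw [Complex.normSq_apply]
  simp [h1]
  linear_combination y^2 * h2

theorem Eis.near (E : Eis ω σ) (ζ : ℂ) : ∃ l : R, Complex.normSq (ζ + σ l) ≤ 1/3 := by
  obtain ⟨h1, h2⟩ := wfacts _ E.hw
  have him : (σ ω).im ≠ 0 := by intro h; rw [h] at h2; norm_num at h2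
  set y := ζ.im / (σ ω).im with hy
  set x := ζ.re + y/2 with hx
  have hz : ζ = x + y * σ ω := by
    apply Complex.ext
    · simp [h1, hx]; ring
    · simp [hy]; field_simp
  obtain ⟨m, n, h⟩ := hexreal x y
  refine ⟨m + n * ω, ?_⟩
  have : ζ + σ (m + n * ω) = ((x+m : ℝ):ℂ) + ((y+n : ℝ) : ℂ) * σ ω := by
    rw [hz]; push_cast; simp; ring
  rw [this, E.nsq]
  exact h

theorem Eis.nat (E : Eis ω σ) (z : R) : ∃ k : ℕ, Complex.normSq (σ z) = k := by
  obtain ⟨m, n, rfl⟩ := E.rep z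
  have h0 : 0 ≤ m^2-m*n+n^2 := by nlinarith [sq_nonneg (m-n), sq_nonneg m, sq_nonneg n]
  refine ⟨(m^2-m*n+n^2).toNat, ?_⟩
  have := E.nsq m n
  have h3 : (((m^2-m*n+n^2).toNat : ℤ) : ℝ) = ((m^2-m*n+n^2 : ℤ) : ℝ) := by
    rw [Int.toNat_of_nonneg h0]
  push_cast at h3 this ⊢
  rw [h3, ← this]; simp

/-- units -/
theorem Eis.unit (E : Eis ω σ) (z : R) (hz : Complex.normSq (σ z) = 1) :
    z = 1 ∨ z = -1 ∨ z = ω ∨ z = -ω ∨ z = ω^2 ∨ z = -ω^2 := by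
  obtain ⟨m, n, rfl⟩ := E.rep z
  have := E.nsq m n
  have h : m^2-m*n+n^2 = 1 := by
    have e : σ (m + n * ω) = ((m:ℝ):ℂ) + ((n:ℝ):ℂ) * σ ω := by simp
    rw [e, this] at hz
    exact_mod_cast hz
  have hm : m^2 ≤ 1 := by nlinarith [sq_nonneg (m-2*n)]
  have hn : n^2 ≤ 1 := by nlinarith [sq_nonneg (n-2*m)]
  have hm1 : m ≤ 1 := by nlinarith
  have hm2 : -1 ≤ m := by nlinarith
  have hn1 : n ≤ 1 := by nlinarith
  have hn2 : -1 ≤ n := by nlinarith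
  have h2 : ω^2 = -1 - ω := by linear_combination E.hω
  rw [h2]
  interval_cases m <;> interval_cases n <;> simp at h <;> simp
  · right; right; right; right; left; ring
  · right; right; right; right; right; ring

theorem Eis.nsq_unit (E : Eis ω σ) (a d : R) (h : a * d = 1) : Complex.normSq (σ a) = 1 := by
  obtain ⟨k, hk⟩ := E.nat a
  obtain ⟨l, hl⟩ := E.nat d
  have := congrArg (fun z => Complex.normSq (σ z)) h
  simp [hk, hl] at this
  have h : k * l = 1 := by exact_mod_cast this
  rw [hk, Nat.eq_one_of_mul_eq_one_right h]; simp

theorem Eis.nontriv (_E : Eis ω σ) : (1:R) ≠ 0 := by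
  intro h
  have := congrArg σ h
  simp at this

theorem Eis.three (E : Eis ω σ) (z : R) : (2 * ω + 1) * z ≠ 1 := by
  intro h
  have h1 := E.nsq_unit _ _ h
  have := E.nsq 1 2
  have e : σ (2 * ω + 1) = ((1:ℝ):ℂ) + ((2:ℝ):ℂ) * σ ω := by
    have h2 : σ 2 = 2 := map_ofNat σ 2
    simp [h2]; ring
  rw [e, this] at h1
  norm_num at h1

theorem Eis.phi (E : Eis ω σ) : ∃ f : R →+* ZMod 3, f ω = 1 ∧ ∀ z, f z = 0 ↔ z ∈ Ideal.span ({2*ω+1} : Set R) := by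
  set I := Ideal.span ({2*ω+1} : Set R) with hI
  have h3 : (Ideal.Quotient.mk I) 3 = 0 := by
    rw [Ideal.Quotient.eq_zero_iff_mem, hI, Ideal.mem_span_singleton]
    exact ⟨-(2*ω+1), by linear_combination 4 * E.hω⟩
  have hne : I ≠ ⊤ := by
    intro h
    have : (1:R) ∈ I := by rw [h]; trivial
    rw [hI, Ideal.mem_span_singleton] at this
    obtain ⟨z, hz⟩ := this
    exact E.three z hz.symm
  have : Nontrivial (R ⧸ I) := Ideal.Quotient.nontrivial_iff.2 hne
  have h30 : ((3:ℕ) : R ⧸ I) = 0 := by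
    rw [← h3, ← map_natCast (Ideal.Quotient.mk I)]; norm_num
  have hω1 : (Ideal.Quotient.mk I) ω = 1 := by
    rw [← map_one (Ideal.Quotient.mk I), Ideal.Quotient.eq, hI, Ideal.mem_span_singleton]
    exact ⟨-ω^2, by linear_combination (2 * ω - 1) * E.hω⟩
  let g := ZMod.castHom (ringChar.dvd h30) (R ⧸ I)
  have hg : Function.Bijective g := by
    refine ⟨g.injective, fun z => ?_⟩
    obtain ⟨z, rfl⟩ := Ideal.Quotient.mk_surjective z
    obtain ⟨m, n, rfl⟩ := E.rep z
    exact ⟨m + n, by simp [hω1]⟩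
  let e := RingEquiv.ofBijective g hg
  refine ⟨e.symm.toRingHom.comp (Ideal.Quotient.mk I), ?_, fun z => ?_⟩
  · simp [hω1]
  · simp [Ideal.Quotient.eq_zero_iff_mem]
end

end PA

section PB

set_option linter.all false
open Matrix

/-- short name -/
abbrev SLt (R : Type*) [CommRing R] := Matrix.SpecialLinearGroup (Fin 2) R

def gS (R : Type*) [CommRing R] : SLt R := ⟨!![0, -1; 1, 0], by simp⟩
def gT {R : Type*} [CommRing R] (x : R) : SLt R := ⟨!![1, x; 0, 1], by simp⟩

section
variable {R : Type*} [CommRing R] {ω : R} {σ : R →+* ℂ}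

theorem Eis.cube (E : Eis ω σ) : ω^3 = 1 := by linear_combination (ω - 1) * E.hω

def gD (E : Eis ω σ) : SLt R := ⟨!![ω, 0; 0, ω^2], by simp; linear_combination E.cube⟩

theorem gS00 : (gS R) 0 0 = 0 := rfl
theorem gS01 : (gS R) 0 1 = -1 := rfl
theorem gS10 : (gS R) 1 0 = 1 := rfl
theorem gS11 : (gS R) 1 1 = 0 := rfl
theorem gT00 (x : R) : (gT x) 0 0 = 1 := rfl
theorem gT01 (x : R) : (gT x) 0 1 = x := rfl
theorem gT10 (x : R) : (gT x) 1 0 = 0 := rfl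
theorem gT11 (x : R) : (gT x) 1 1 = 1 := rfl
theorem gD00 (E : Eis ω σ) : (gD E) 0 0 = ω := rfl
theorem gD01 (E : Eis ω σ) : (gD E) 0 1 = 0 := rfl
theorem gD10 (E : Eis ω σ) : (gD E) 1 0 = 0 := rfl
theorem gD11 (E : Eis ω σ) : (gD E) 1 1 = ω^2 := rfl
theorem gmul (g h : SLt R) (i j : Fin 2) : (g * h) i j = g i 0 * h 0 j + g i 1 * h 1 j := by
  rw [Matrix.SpecialLinearGroup.coe_mul, Matrix.mul_apply, Fin.sum_univ_two]
theorem gneg (g : SLt R) (i j : Fin 2) : (-g) i j = - (g i j) := by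
  rw [Matrix.SpecialLinearGroup.coe_neg, Matrix.neg_apply]
theorem g100 : (1 : SLt R) 0 0 = 1 := by simp
theorem g101 : (1 : SLt R) 0 1 = 0 := by simp
theorem g110 : (1 : SLt R) 1 0 = 0 := by simp
theorem g111 : (1 : SLt R) 1 1 = 1 := by simp
theorem gdet (g : SLt R) : g 0 0 * g 1 1 - g 0 1 * g 1 0 = 1 := by
  have := g.2; rwa [Matrix.det_fin_two] at this
theorem gext {g h : SLt R} (h00 : g 0 0 = h 0 0) (h01 : g 0 1 = h 0 1) (h10 : g 1 0 = h 1 0)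
    (h11 : g 1 1 = h 1 1) : g = h := by
  ext i j
  fin_cases i <;> fin_cases j <;> assumption


theorem gT_add (x y : R) : gT (x + y) = gT x * gT y := by
  apply gext <;> simp only [gmul, gT00, gT01, gT10, gT11] <;> ring
theorem gT_zero : gT (0:R) = 1 := by
  apply gext <;> simp only [gT00, gT01, gT10, gT11, g100, g101, g110, g111]
theorem gS_sq : gS R * gS R = -1 := by
  apply gext <;> simp only [gmul, gneg, gS00, gS01, gS10, gS11, g100, g101, g110, g111] <;> ring
theorem gST : gS R * gT 1 * (gS R * gT 1) * (gS R * gT 1) = -1 := by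
  apply gext <;> simp only [gmul, gneg, gS00, gS01, gS10, gS11, gT00, gT01, gT10, gT11, g100, g101, g110, g111] <;> ring
theorem gDT (E : Eis ω σ) (x : R) : gD E * gT x = gT (ω^2*x) * gD E := by
  apply gext <;> simp only [gmul, gD00, gD01, gD10, gD11, gT00, gT01, gT10, gT11]
  · ring
  · linear_combination (-ω * x) * E.cube
  · ring
  · ring
theorem gSD (E : Eis ω σ) : gS R * gD E * (gS R * gD E) = -1 := by
  apply gext <;> simp only [gmul, gneg, gD00, gD01, gD10, gD11, gS00, gS01, gS10, gS11, g100, g101, g110, g111]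
  · linear_combination - E.cube
  · ring
  · ring
  · linear_combination - E.cube
theorem gDmem (E : Eis ω σ) : gT ω * gD E * gS R * gT ω * gS R = gS R * gT (-ω^2) := by
  apply gext <;> simp only [gmul, gD00, gD01, gD10, gD11, gS00, gS01, gS10, gS11, gT00, gT01, gT10, gT11]
  · linear_combination ω * E.cube
  · linear_combination -E.cube
  · linear_combination E.cube
  · ring_nf

theorem gupper (E : Eis ω σ) (g : SLt R) (h : g 1 0 = 0) :
    ∃ k : ℕ, g = gD E ^ k * gT (g 1 1 * g 0 1) ∨ g = -1 * (gD E ^ k * gT (g 1 1 * g 0 1)) := by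
  have hd := gdet g
  rw [h, mul_zero, sub_zero] at hd
  have hc := E.cube
  have key : ∀ a d : R, a * d = 1 → ∀ e f : R, e * f = 1 → a = e → d = f := by
    intro a d h1 e f h2 h3
    subst h3
    linear_combination f * h1 - d * h2
  rcases E.unit _ (E.nsq_unit _ _ hd) with h' | h' | h' | h' | h' | h'
  · have := key _ _ hd 1 1 (by ring) h'
    refine ⟨0, Or.inl ?_⟩
    apply gext <;> simp only [gmul, gT00, gT01, gT10, gT11, h, h', this, pow_zero, g100, g101, g110, g111] <;> ring
  · have := key _ _ hd (-1) (-1) (by ring) h'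
    refine ⟨0, Or.inr ?_⟩
    apply gext <;> simp only [gmul, gneg, gT00, gT01, gT10, gT11, h, h', this, pow_zero, g100, g101, g110, g111] <;> ring
  · have := key _ _ hd ω (ω^2) (by linear_combination hc) h'
    refine ⟨1, Or.inl ?_⟩
    apply gext <;> simp only [gmul, gT00, gT01, gT10, gT11, h, h', this, pow_one, gD00, gD01, gD10, gD11] 
    · ring
    · linear_combination (- g 0 1) * hc
    · ring
    · ring
  · have := key _ _ hd (-ω) (-ω^2) (by linear_combination hc) h'
    refine ⟨1, Or.inr ?_⟩
    apply gext <;> simp only [gmul, gneg, gT00, gT01, gT10, gT11, h, h', this, pow_one, gD00, gD01, gD10, gD11, g100, g101, g110, g111]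
    · ring
    · linear_combination (- g 0 1) * hc
    · ring
    · ring
  · have := key _ _ hd (ω^2) (ω) (by linear_combination hc) h'
    refine ⟨2, Or.inl ?_⟩
    apply gext <;> simp only [gmul, gT00, gT01, gT10, gT11, h, h', this, pow_two, gD00, gD01, gD10, gD11] 
    · ring
    · linear_combination (- g 0 1) * hc
    · ring
    · linear_combination (- ω) * hc
  · have := key _ _ hd (-ω^2) (-ω) (by linear_combination hc) h'
    refine ⟨2, Or.inr ?_⟩
    apply gext <;> simp only [gmul, gneg, gT00, gT01, gT10, gT11, h, h', this, pow_two, gD00, gD01, gD10, gD11, g100, g101, g110, g111]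
    · ring
    · linear_combination (- g 0 1) * hc
    · ring
    · linear_combination ω * hc

theorem ggen_aux (E : Eis ω σ) (H : Subgroup (SLt R)) (hS : gS R ∈ H) (hT : ∀ x, gT x ∈ H) (k : ℕ) :
    ∀ g : SLt R, Complex.normSq (σ (g 1 0)) < k → g ∈ H := by
  induction k with
  | zero => intro g hg; simp at hg; exact absurd hg (not_lt.2 (Complex.normSq_nonneg _))
  | succ k ih =>
    intro g hg
    by_cases hc : g 1 0 = 0
    · have hD : gD E ∈ H := by
        have h1 : gT ω * gD E * gS R * gT ω * gS R ∈ H := by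
          rw [gDmem]; exact H.mul_mem hS (hT _)
        rw [H.mul_mem_cancel_right hS, H.mul_mem_cancel_right (hT _), H.mul_mem_cancel_right hS,
          H.mul_mem_cancel_left (hT _)] at h1
        exact h1
      have h1 : (-1 : SLt R) ∈ H := by rw [← gS_sq]; exact H.mul_mem hS hS
      obtain ⟨n, h | h⟩ := gupper E g hc
      · rw [h]; exact H.mul_mem (H.pow_mem hD _) (hT _)
      · rw [h]; exact H.mul_mem h1 (H.mul_mem (H.pow_mem hD _) (hT _))
    · have hc' : σ (g 1 0) ≠ 0 := fun h => hc (E.inj (by rw [h, map_zero]))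
      obtain ⟨l, hl⟩ := E.near (σ (g 0 0) / σ (g 1 0))
      have h2 : gS R * (gT l * g) ∈ H := by
        apply ih
        have e : (gS R * (gT l * g)) 1 0 = g 0 0 + l * g 1 0 := by
          simp only [gmul, gS00, gS01, gS10, gS11, gT00, gT01, gT10, gT11]; ring
        have e2 : σ (g 0 0 + l * g 1 0) = (σ (g 0 0) / σ (g 1 0) + σ l) * σ (g 1 0) := by
          rw [map_add, map_mul]; field_simp
        obtain ⟨m, hm⟩ := E.nat (g 0 0 + l * g 1 0)
        obtain ⟨n, hn⟩ := E.nat (g 1 0)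
        rw [e, hm]
        rw [hn] at hg
        have h3 : (m : ℝ) < n := by
          rw [← hm, e2, map_mul, ← hn]
          have := Complex.normSq_pos.2 hc'
          nlinarith
        have h4 : m < n := by exact_mod_cast h3
        have h5 : n < k + 1 := by exact_mod_cast hg
        have : m < k := by omega
        exact_mod_cast this
      rw [H.mul_mem_cancel_left hS, H.mul_mem_cancel_left (hT _)] at h2
      exact h2

theorem ggen (E : Eis ω σ) (H : Subgroup (SLt R)) (hS : gS R ∈ H) (hT : ∀ x, gT x ∈ H) (g : SLt R) :
    g ∈ H := by
  obtain ⟨n, hn⟩ := E.nat (g 1 0)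
  exact ggen_aux E H hS hT (n+1) g (by rw [hn]; push_cast; linarith)
end

end PB

section PC

set_option linter.all false
open Matrix

section
variable {R : Type*} [CommRing R] {ω : R} {σ : R →+* ℂ} {Q : Type*} [Group Q]

theorem q_conj (q : SLt R →* Q) {g h u : SLt R} (e : u * g = h * u) (hg : q g = 1) : q h = 1 := by
  have := congrArg q e
  simpa [hg] using this

theorem gTinv (l : R) : (gT l)⁻¹ = gT (-l) := by
  rw [inv_eq_iff_mul_eq_one, ← gT_add, add_neg_cancel, gT_zero]

theorem desc_bound (a t b c : ℂ) (ht : t = 0 ∨ t = 1) (h : a * (t - a) - b * c = 1)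
    (ha : Complex.normSq (a - t / 2) ≤ Complex.normSq c / 3)
    (hbc : Complex.normSq c ≤ Complex.normSq b) : Complex.normSq c < 2 := by
  rw [Complex.normSq_eq_norm_sq] at *
  rw [Complex.normSq_eq_norm_sq] at *
  have h1 : ‖c‖ ≤ ‖b‖ := by
    by_contra! hh
    nlinarith [norm_nonneg b, norm_nonneg c]
  have h2 : b * c = -((a - t/2)^2 + (1 - t^2/4)) := by linear_combination -h
  have h3 : ‖(1 - t^2/4 : ℂ)‖ ≤ 1 := by
    rcases ht with rfl | rfl <;> norm_num
  have h4 : ‖b‖ * ‖c‖ ≤ ‖a - t/2‖^2 + 1 := by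
    rw [← norm_mul, h2, norm_neg]
    refine (norm_add_le _ _).trans ?_
    rw [norm_pow]; linarith
  nlinarith [norm_nonneg b, norm_nonneg c]

theorem desc (E : Eis ω σ) (q : SLt R →* Q) (t : R) (ht : t = 0 ∨ t = 1) (k : ℕ) :
    ∀ g : SLt R, g 0 0 + g 1 1 = t → q g = 1 → Complex.normSq (σ (g 1 0)) < k →
    ∃ g : SLt R, g 0 0 + g 1 1 = t ∧ q g = 1 ∧
      (g 1 0 = 0 ∨ Complex.normSq (σ (g 1 0)) = 1) := by
  induction k with
  | zero => intro g _ _ hg; simp at hg; exact absurd hg (not_lt.2 (Complex.normSq_nonneg _))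
  | succ k ih =>
    intro g hg hq hk
    by_cases hc : g 1 0 = 0
    · exact ⟨g, hg, hq, Or.inl hc⟩
    have hc' : σ (g 1 0) ≠ 0 := fun h => hc (E.inj (by rw [h, map_zero]))
    obtain ⟨l, hl⟩ := E.near ((σ (g 0 0) - σ t / 2) / σ (g 1 0))
    have hq' : q (gT l * g * gT (-l)) = 1 := by
      apply q_conj q (u := gT l) _ hq
      rw [mul_assoc, ← gT_add]; simp [gT_zero]
    set g' := gT l * g * gT (-l) with hg'
    have e10 : g' 1 0 = g 1 0 := by
      simp only [hg', gmul, gT00, gT01, gT10, gT11]; ring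
    have e00 : g' 0 0 = g 0 0 + l * g 1 0 := by
      simp only [hg', gmul, gT00, gT01, gT10, gT11]; ring
    have e11 : g' 1 1 = t - g' 0 0 := by
      rw [← hg, e00]
      simp only [hg', gmul, gT00, gT01, gT10, gT11]; ring
    by_cases hbc : Complex.normSq (σ (g' 1 0)) ≤ Complex.normSq (σ (g' 0 1))
    · refine ⟨g', by rw [e11]; ring, hq', Or.inr ?_⟩
      have hd := congrArg σ (gdet g')
      rw [e11] at hd
      simp only [map_sub, map_mul, map_one] at hd
      have ht' : σ t = 0 ∨ σ t = 1 := by rcases ht with rfl | rfl <;> simp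
      have h2 := desc_bound (σ (g' 0 0)) (σ t) (σ (g' 0 1)) (σ (g' 1 0)) ht' hd ?_ hbc
      · rw [e10] at h2 ⊢
        obtain ⟨n, hn⟩ := E.nat (g 1 0)
        have := Complex.normSq_pos.2 hc'
        rw [hn] at h2 this ⊢
        have a1 : 0 < n := by exact_mod_cast this
        have a2 : n < 2 := by exact_mod_cast h2
        have : n = 1 := by omega
        simp [this]
      · have e2 : σ (g' 0 0) - σ t / 2 = ((σ (g 0 0) - σ t / 2) / σ (g 1 0) + σ l) * σ (g 1 0) := by
          rw [e00, map_add, map_mul]; field_simp; ring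
        rw [e2, map_mul, e10]
        have := Complex.normSq_pos.2 hc'
        nlinarith
    · refine ih (gS R * g' * (-1 * gS R)) ?_ ?_ ?_
      · simp only [gmul, gneg, gS00, gS01, gS10, gS11, g100, g101, g110, g111]; linear_combination e11
      · apply q_conj q (u := gS R) _ hq'
        have : (-1 * gS R) * gS R = 1 := by rw [mul_assoc, gS_sq]; simp
        rw [mul_assoc _ _ (gS R), this, mul_one]
      · have e : (gS R * g' * (-1 * gS R)) 1 0 = - g' 0 1 := by
          simp only [gmul, gneg, gS00, gS01, gS10, gS11, g100, g101, g110, g111]; ring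
        rw [e, map_neg, Complex.normSq_neg]
        rw [e10] at hbc
        obtain ⟨m, hm⟩ := E.nat (g' 0 1)
        obtain ⟨n, hn⟩ := E.nat (g 1 0)
        rw [hm, hn, not_le] at hbc
        rw [hn] at hk
        rw [hm]
        have h4 : m < n := by exact_mod_cast hbc
        have h5 : n < k + 1 := by exact_mod_cast hk
        have : m < k := by omega
        exact_mod_cast this

theorem terminal (E : Eis ω σ) (q : SLt R →* Q) (hm : q (-1) = 1) (t : R) (g : SLt R)
    (hg : g 0 0 + g 1 1 = t) (hq : q g = 1) (hc : Complex.normSq (σ (g 1 0)) = 1) :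
    q (gS R * gT t) = 1 ∨ q (gS R * gT (-t)) = 1 := by
  have hu := E.unit _ hc
  have hc3 := E.cube
  obtain ⟨e, he⟩ : ∃ e, g 1 0 * e = 1 := by
    rcases hu with h | h | h | h | h | h <;> rw [h]
    · exact ⟨1, by ring⟩
    · exact ⟨-1, by ring⟩
    · exact ⟨ω^2, by linear_combination hc3⟩
    · exact ⟨-ω^2, by linear_combination hc3⟩
    · exact ⟨ω, by linear_combination hc3⟩
    · exact ⟨-ω, by linear_combination hc3⟩
  set l := - (g 0 0 * e) with hl
  have hq' : q (gT l * g * gT (-l)) = 1 := by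
    apply q_conj q (u := gT l) _ hq
    rw [mul_assoc, ← gT_add]; simp [gT_zero]
  set g' := gT l * g * gT (-l) with hg'
  have e10 : g' 1 0 = g 1 0 := by
    simp only [hg', gmul, gT00, gT01, gT10, gT11]; ring
  have e00 : g' 0 0 = 0 := by
    simp only [hg', gmul, gT00, gT01, gT10, gT11]; linear_combination (-g 0 0) * he
  have e11 : g' 1 1 = t := by
    have : g' 0 0 + g' 1 1 = g 0 0 + g 1 1 := by
      simp only [hg', gmul, gT00, gT01, gT10, gT11]; ring
    rw [e00, hg, zero_add] at this
    exact this
  have hd := gdet g'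
  rw [← e10] at hu he
  have e01 : g' 0 1 = -e := by
    linear_combination (-e) * hd + e * g' 1 1 * e00 - g' 0 1 * he
  clear_value g'
  have key : ∀ f : R, g' 1 0 * f = 1 → e = f := by
    intro f hf
    linear_combination f * he - e * hf
  have hq2 : q (-1 * g') = 1 := by rw [map_mul, hm, hq', one_mul]
  rcases hu with h | h | h | h | h | h <;> rw [h] at key
  · left
    have hk := key 1 (by ring)
    apply q_conj q (u := 1) _ hq'
    apply gext <;> simp only [gmul, gneg, gS00, gS01, gS10, gS11, gT00, gT01, gT10, gT11, g100, g101, g110, g111, e00, e01, e11, h, hk] <;> ring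
  · right
    have hk := key (-1) (by ring)
    apply q_conj q (u := 1) _ hq2
    apply gext <;> simp only [gmul, gneg, gS00, gS01, gS10, gS11, gT00, gT01, gT10, gT11, g100, g101, g110, g111, e00, e01, e11, h, hk] <;> ring
  · left
    have hk := key (ω^2) (by linear_combination hc3)
    apply q_conj q (u := gD E * gD E) _ hq'
    apply gext <;> simp only [gmul, gneg, gS00, gS01, gS10, gS11, gT00, gT01, gT10, gT11, gD00, gD01, gD10, gD11, e00, e01, e11, h, hk]
    · ring
    · ring
    · linear_combination ω^2 * hc3
    · ring
  · right
    have hk := key (-ω^2) (by linear_combination hc3)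
    apply q_conj q (u := gD E * gD E) _ hq2
    apply gext <;> simp only [gmul, gneg, gS00, gS01, gS10, gS11, gT00, gT01, gT10, gT11, gD00, gD01, gD10, gD11, g100, g101, g110, g111, e00, e01, e11, h, hk]
    · ring
    · ring
    · linear_combination ω^2 * hc3
    · ring
  · left
    have hk := key (ω) (by linear_combination hc3)
    apply q_conj q (u := gD E) _ hq'
    apply gext <;> simp only [gmul, gneg, gS00, gS01, gS10, gS11, gT00, gT01, gT10, gT11, gD00, gD01, gD10, gD11, e00, e01, e11, h, hk]
    · ring
    · ring
    · linear_combination ω * hc3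
    · ring
  · right
    have hk := key (-ω) (by linear_combination hc3)
    apply q_conj q (u := gD E) _ hq2
    apply gext <;> simp only [gmul, gneg, gS00, gS01, gS10, gS11, gT00, gT01, gT10, gT11, gD00, gD01, gD10, gD11, g100, g101, g110, g111, e00, e01, e11, h, hk]
    · ring
    · ring
    · linear_combination ω * hc3
    · ring

theorem trace_zero (E : Eis ω σ) (q : SLt R →* Q) (hm : q (-1) = 1) (g : SLt R)
    (hg : g 0 0 + g 1 1 = 0) (hq : q g = 1) : q (gS R) = 1 := by
  obtain ⟨n, hn⟩ := E.nat (g 1 0)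
  obtain ⟨g, hg, hq, h | h⟩ := desc E q 0 (Or.inl rfl) (n+1) g hg hq (by rw [hn]; push_cast; linarith)
  · exfalso
    have hd := gdet g
    rw [h, mul_zero, sub_zero] at hd
    have h6 : (g 0 0)^6 = 1 := by
      have := E.cube
      rcases E.unit _ (E.nsq_unit _ _ hd) with h' | h' | h' | h' | h' | h' <;> rw [h']
      · ring
      · ring
      · linear_combination (ω^3 + 1) * this
      · linear_combination (ω^3 + 1) * this
      · linear_combination (ω^9 + ω^6 + ω^3 + 1) * this
      · linear_combination (ω^9 + ω^6 + ω^3 + 1) * this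
    have h2 : (g 0 0)^2 = -1 := by linear_combination -hd + g 0 0 * hg
    have h3 : (-1 : R)^3 = 1 := by rw [← h2, ← pow_mul]; exact h6
    have := congrArg σ h3
    norm_num at this
  · simpa [gT_zero] using terminal E q hm 0 g hg hq h

theorem trace_one [IsDomain R] (E : Eis ω σ) (q : SLt R →* Q) (hm : q (-1) = 1) (g : SLt R)
    (hg : g 0 0 + g 1 1 = 1) (hq : q g = 1) : q (gS R * gT 1) = 1 ∨ q (gS R * gT (-1)) = 1 ∨
      ∃ x, q (gD E * gT x) = 1 := by
  obtain ⟨n, hn⟩ := E.nat (g 1 0)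
  obtain ⟨g, hg, hq, h | h⟩ := desc E q 1 (Or.inr rfl) (n+1) g hg hq (by rw [hn]; push_cast; linarith)
  · right; right
    have hd := gdet g
    rw [h, mul_zero, sub_zero] at hd
    have h2 : (g 0 0 + ω) * (g 0 0 + ω^2) = 0 := by
      linear_combination E.cube + g 0 0 * E.hω + g 0 0 * hg - hd
    have hq2 : q (-1 * g) = 1 := by rw [map_mul, hm, hq, one_mul]
    rcases mul_eq_zero.1 h2 with h2 | h2
    · have a1 : g 0 0 = -ω := by linear_combination h2
      have a2 : g 1 1 = -ω^2 := by linear_combination hg - h2 + E.hω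
      refine ⟨-ω^2 * g 0 1, ?_⟩
      apply q_conj q (u := 1) _ hq2
      apply gext <;> simp only [gmul, gneg, gT00, gT01, gT10, gT11, gD00, gD01, gD10, gD11, g100, g101, g110, g111, a1, a2, h]
      · ring
      · linear_combination (g 0 1) * E.cube
      · ring
      · ring
    · have a1 : g 0 0 = -ω^2 := by linear_combination h2
      have a2 : g 1 1 = -ω := by linear_combination hg - h2 + E.hω
      refine ⟨ω^2 * g 0 1, ?_⟩
      have : gD E * gT (ω^2 * g 0 1) = (-1 * g)⁻¹ := by
        rw [eq_inv_iff_mul_eq_one]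
        apply gext <;> simp only [gmul, gneg, gT00, gT01, gT10, gT11, gD00, gD01, gD10, gD11, g100, g101, g110, g111, a1, a2, h]
        · linear_combination E.cube
        · linear_combination (g 0 1 * ω) * E.cube
        · ring
        · linear_combination E.cube
      rw [this, map_inv, hq2, inv_one]
  · rcases terminal E q hm 1 g hg hq h with h | h
    · exact Or.inl h
    · exact Or.inr (Or.inl h)
end

end PC

section PD

set_option linter.all false
open Matrix

section
variable {R : Type*} [CommRing R] {ω : R} {σ : R →+* ℂ} {Q : Type*} [Group Q]

theorem unip (E : Eis ω σ) (g : SLt R) (hg : g 0 0 + g 1 1 = 2) (n : ℕ) (hn : 0 < n) (h : g^n = 1) :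
    g = 1 := by
  have hd := gdet g
  have hk : ∀ k : ℕ, (g^k) 0 0 = 1 + k * (g 0 0 - 1) ∧ (g^k) 0 1 = k * g 0 1 ∧
      (g^k) 1 0 = k * g 1 0 ∧ (g^k) 1 1 = 1 + k * (g 1 1 - 1) := by
    intro k
    induction k with
    | zero => simp
    | succ k ih =>
      obtain ⟨h1, h2, h3, h4⟩ := ih
      rw [pow_succ]
      simp only [gmul, h1, h2, h3, h4]
      push_cast
      refine ⟨?_, ?_, ?_, ?_⟩
      · linear_combination k * (g 0 0 ) * hg - k * hd
      · linear_combination k * g 0 1 * hg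
      · linear_combination k * g 1 0 * hg
      · linear_combination k * (g 1 1 ) * hg - k * hd
  obtain ⟨h1, h2, h3, h4⟩ := hk n
  rw [h] at h1 h2 h3 h4
  have hz : ∀ x : R, (n : R) * x = 0 → x = 0 := by
    intro x hx
    apply E.inj
    have := congrArg σ hx
    rw [map_mul, map_natCast, map_zero] at this
    rw [map_zero]
    rcases mul_eq_zero.1 this with h | h
    · exact absurd h (by exact_mod_cast hn.ne')
    · exact h
  rw [g100] at h1
  rw [g101] at h2
  rw [g110] at h3
  rw [g111] at h4
  apply gext
  · rw [g100]; linear_combination hz (g 0 0 - 1) (by linear_combination -h1)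
  · rw [g101]; exact hz _ h2.symm
  · rw [g110]; exact hz _ h3.symm
  · rw [g111]; linear_combination hz (g 1 1 - 1) (by linear_combination -h4)

theorem eig (A : Matrix (Fin 2) (Fin 2) ℂ) (hd : A.det = 1) (n : ℕ) (hn : 0 < n) (h : A^n = 1) :
    ∃ r : ℝ, A 0 0 + A 1 1 = r ∧ |r| ≤ 2 := by
  obtain ⟨r, hr⟩ := IsAlgClosed.exists_pow_nat_eq ((A 0 0 + A 1 1)^2 - 4) (n := 2) (by norm_num)
  set z := (A 0 0 + A 1 1 + r) / 2 with hz
  have hq : z * (A 0 0 + A 1 1 - z) = 1 := by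
    rw [hz]; linear_combination -1/4 * hr
  have hdet : (A - z • (1 : Matrix (Fin 2) (Fin 2) ℂ)).det = 0 := by
    rw [Matrix.det_fin_two] at hd ⊢
    simp
    linear_combination hd - hq
  obtain ⟨v, hv, hv2⟩ := Matrix.exists_mulVec_eq_zero_iff.2 hdet
  have hv3 : A *ᵥ v = z • v := by
    rw [Matrix.sub_mulVec, Matrix.smul_mulVec, Matrix.one_mulVec, sub_eq_zero] at hv2
    exact hv2
  have hp : ∀ k : ℕ, (A^k) *ᵥ v = z^k • v := by
    intro k
    induction k with
    | zero => simp
    | succ k ih =>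
      rw [pow_succ, ← Matrix.mulVec_mulVec, hv3, Matrix.mulVec_smul, ih, smul_smul, pow_succ, mul_comm]
  have h1 := hp n
  rw [h, Matrix.one_mulVec] at h1
  have hzn : z^n = 1 := by
    have : (z^n - 1) • v = 0 := by rw [sub_smul, one_smul, ← h1, sub_self]
    rcases smul_eq_zero.1 this with h | h
    · exact sub_eq_zero.1 h
    · exact absurd h hv
  have hnorm : ‖z‖ = 1 := Complex.norm_eq_one_of_pow_eq_one hzn hn.ne'
  have hc : A 0 0 + A 1 1 - z = (starRingEnd ℂ) z := by
    have hzz : z * (starRingEnd ℂ) z = 1 := by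
      rw [Complex.mul_conj, Complex.normSq_eq_norm_sq, hnorm]; simp
    have hz0 : z ≠ 0 := by intro h; rw [h] at hnorm; simp at hnorm
    exact mul_left_cancel₀ hz0 (hq.trans hzz.symm)
  refine ⟨2 * z.re, ?_, ?_⟩
  · have := Complex.add_conj z
    rw [← hc] at this
    rw [← this]; ring
  · have := Complex.abs_re_le_norm z
    rw [abs_mul]; rw [hnorm] at this; norm_num; linarith

theorem trace_of_fin (E : Eis ω σ) (g : SLt R) (n : ℕ) (hn : 0 < n) (h : g^n = 1)
    (h1 : g ≠ 1) (h2 : g ≠ -1) :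
    g 0 0 + g 1 1 = 0 ∨ g 0 0 + g 1 1 = 1 ∨ (-g) 0 0 + (-g) 1 1 = 1 := by
  obtain ⟨r, hr, hr2⟩ := eig (SpecialLinearGroup.map σ g).1 (SpecialLinearGroup.map σ g).2 n hn
    (by
      have := congrArg Subtype.val (congrArg (SpecialLinearGroup.map σ) h)
      rw [map_pow, map_one] at this
      exact this)
  have hr' : σ (g 0 0 + g 1 1) = r := by
    rw [← hr]; simp
  obtain ⟨m, k, hmk⟩ := E.rep (g 0 0 + g 1 1)
  rw [hmk] at hr'
  obtain ⟨a1, a2⟩ := wfacts _ E.hw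
  have him := congrArg Complex.im hr'
  have hre := congrArg Complex.re hr'
  simp at him hre
  have hk : k = 0 := by
    rcases him with h | h
    · exact_mod_cast h
    · rw [h] at a2; norm_num at a2
  subst hk
  simp at hre hmk
  rw [← hre] at hr2
  have hm : |m| ≤ 2 := by exact_mod_cast hr2
  rw [abs_le] at hm
  obtain ⟨b1, b2⟩ := hm
  interval_cases m
  · exfalso
    apply h2
    have := unip E (-g) (by rw [gneg, gneg]; linear_combination -hmk) (2*n) (by omega)
      (by rw [pow_mul, neg_sq, ← pow_mul, mul_comm, pow_mul, h, one_pow])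
    rw [← this, neg_neg]
  · right; right
    rw [gneg, gneg]; linear_combination -hmk
  · left; simpa using hmk
  · right; left; simpa using hmk
  · exfalso
    exact h1 (unip E g (by simpa using hmk) n hn h)

/-! quotient lemmas -/

theorem q_comm (E : Eis ω σ) (q : SLt R →* Q) (h : ∀ x, Commute (q (gS R)) (q (gT x))) (g g' : SLt R) :
    Commute (q g) (q g') := by
  have hTT : ∀ x y : R, Commute (q (gT x)) (q (gT y)) := by
    intro x y
    rw [Commute, SemiconjBy, ← map_mul, ← map_mul, ← gT_add, ← gT_add, add_comm]
  have h1 : ∀ u, Commute (q u) (q (gS R)) ∧ ∀ x, Commute (q u) (q (gT x)) := by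
    intro u
    have := ggen E ((Subgroup.centralizer ({q (gS R)} ∪ Set.range (fun x => q (gT x)))).comap q) ?_ ?_ u
    · rw [Subgroup.mem_comap, Subgroup.mem_centralizer_iff] at this
      exact ⟨(this _ (by simp)).symm, fun x => (this _ (by simp)).symm⟩
    · rw [Subgroup.mem_comap, Subgroup.mem_centralizer_iff]
      rintro _ (rfl | ⟨x, rfl⟩)
      · rfl
      · exact (h x).symm
    · intro y
      rw [Subgroup.mem_comap, Subgroup.mem_centralizer_iff]
      rintro _ (rfl | ⟨x, rfl⟩)
      · exact h y
      · exact hTT x y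
  have := ggen E ((Subgroup.centralizer {q g}).comap q) ?_ ?_ g'
  · rw [Subgroup.mem_comap, Subgroup.mem_centralizer_iff] at this
    exact this _ rfl
  · rw [Subgroup.mem_comap, Subgroup.mem_centralizer_iff]
    rintro _ rfl
    exact (h1 g).1
  · intro x
    rw [Subgroup.mem_comap, Subgroup.mem_centralizer_iff]
    rintro _ rfl
    exact (h1 g).2 x

theorem q_kill (E : Eis ω σ) (q : SLt R →* Q) (h : ∀ x, Commute (q (gD E)) (q (gT x))) (x : R) :
    q (gT ((2*ω+1)*x)) = 1 := by
  have h1 : ∀ y, q (gT (ω^2*y)) = q (gT y) := by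
    intro y
    have := congrArg q (gDT E y)
    rw [map_mul, map_mul, (h y).eq] at this
    exact (mul_right_cancel this).symm
  have h2 : (2*ω+1)*x = ω^2*(ω^2*x) + -(ω^2*x) := by linear_combination (-x*ω)*E.cube - 0 * x * E.hω + x * E.hω
  rw [h2, gT_add, map_mul, h1, ← map_mul, ← gT_add, add_neg_cancel, gT_zero, map_one]

theorem qT_int (q : SLt R →* Q) (n : ℤ) : q (gT (n:R)) = q (gT 1) ^ n := by
  let f : Multiplicative R →* Q :=
    { toFun := fun x => q (gT x.toAdd)
      map_one' := by simp [gT_zero]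
      map_mul' := by intro x y; simp [gT_add] }
  have := map_zpow f (Multiplicative.ofAdd (1:R)) n
  simpa [f, ← ofAdd_zsmul] using this

theorem qT_three (E : Eis ω σ) (q : SLt R →* Q) (h : ∀ x, q (gT ((2*ω+1)*x)) = 1) : q (gT 1)^3 = 1 := by
  have := qT_int q 3
  have h3 : ((3:ℤ):R) = (2*ω+1)*(-(2*ω+1)) := by push_cast; linear_combination 4 * E.hω
  rw [h3, h] at this
  rw [this]; norm_cast

theorem qT_pow (E : Eis ω σ) (q : SLt R →* Q) (h : ∀ x, q (gT ((2*ω+1)*x)) = 1) (x : R) :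
    ∃ n : ℤ, q (gT x) = q (gT 1) ^ n := by
  obtain ⟨m, n, rfl⟩ := E.rep x
  refine ⟨m + n, ?_⟩
  have : (m:R) + n * ω = ((m + n : ℤ) : R) + (2*ω+1)*(-ω^2*n) := by
    push_cast; linear_combination ((2 * ω - 1) * n) * E.hω
  rw [this, gT_add, map_mul, h, mul_one, qT_int]

theorem qT_pow' (E : Eis ω σ) (q : SLt R →* Q) (h : ∀ x, q (gT ((2*ω+1)*x)) = 1) (x : R) :
    q (gT x) = 1 ∨ q (gT x) = q (gT 1) ∨ q (gT x) = (q (gT 1))⁻¹ := by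
  obtain ⟨n, hn⟩ := qT_pow E q h x
  rw [hn]
  have h3 := qT_three E q h
  have h3z : q (gT 1) ^ (3:ℤ) = 1 := by exact_mod_cast h3
  have : n = 3 * (n/3) + n % 3 := by omega
  rw [this, _root_.zpow_add, _root_.zpow_mul, h3z, _root_.one_zpow, one_mul]
  have h0 : 0 ≤ n % 3 := by omega
  have h4 : n % 3 < 3 := by omega
  interval_cases n % 3
  · left; simp
  · right; left; simp
  · right; right
    rw [eq_inv_iff_mul_eq_one, ← h3z, ← _root_.zpow_add_one]; norm_num

theorem q_triv (E : Eis ω σ) (q : SLt R →* Q) (hs : q (gS R) = 1) (ht : q (gT 1) = 1)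
    (h : ∀ x, q (gT ((2*ω+1)*x)) = 1) (g : SLt R) : q g = 1 := by
  refine ggen E q.ker hs ?_ g
  intro x
  obtain ⟨n, hn⟩ := qT_pow E q h x
  rw [MonoidHom.mem_ker, hn, ht, _root_.one_zpow]

theorem q_rel1 (q : SLt R →* Q) (hm : q (-1) = 1) : q (gS R) * q (gS R) = 1 := by
  rw [← map_mul, gS_sq, hm]
theorem q_rel2 (q : SLt R →* Q) (hm : q (-1) = 1) :
    q (gS R) * q (gT 1) * (q (gS R) * q (gT 1)) * (q (gS R) * q (gT 1)) = 1 := by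
  have := congrArg q (gST (R := R))
  rw [hm] at this
  simpa using this
theorem q_rel3 (E : Eis ω σ) (q : SLt R →* Q) (hm : q (-1) = 1) :
    q (gS R) * q (gD E) * (q (gS R) * q (gD E)) = 1 := by
  have := congrArg q (gSD E)
  rw [hm] at this
  simpa using this

theorem q_comm_s (E : Eis ω σ) (q : SLt R →* Q) (hm : q (-1) = 1)
    (hc : ∀ g g', Commute (q g) (q g')) : q (gS R) = 1 := by
  have h3 := qT_three E q (q_kill E q (fun x => hc _ _))
  have r1 := q_rel1 q hm
  have r2 := q_rel2 q hm
  have r4 : (q (gS R) * q (gT 1))^3 = 1 := by rw [pow_succ, pow_two, r2]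
  rw [(hc _ _).mul_pow, h3, mul_one, pow_succ, pow_two, r1, one_mul] at r4
  exact r4

theorem q_card (E : Eis ω σ) (q : SLt R →* Q) (hm : q (-1) = 1) (hsurj : Function.Surjective q)
    (hc : ∀ g g', Commute (q g) (q g')) : Nat.card Q ∣ 3 := by
  have hk := q_kill E q (fun x => hc _ _)
  have h3 := qT_three E q hk
  have hs := q_comm_s E q hm hc
  have : Subgroup.zpowers (q (gT 1)) = ⊤ := by
    rw [eq_top_iff]
    intro y _
    obtain ⟨g, rfl⟩ := hsurj y
    refine ggen E ((Subgroup.zpowers (q (gT 1))).comap q) ?_ ?_ g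
    · rw [Subgroup.mem_comap, hs]; exact one_mem _
    · intro x
      obtain ⟨n, hn⟩ := qT_pow E q hk x
      rw [Subgroup.mem_comap, hn]
      exact Subgroup.zpow_mem_zpowers _ _
  rw [← orderOf_eq_card_of_zpowers_eq_top this]
  exact orderOf_dvd_of_pow_eq_one h3

/-- if s is a power of t -/
theorem q_triv2 (E : Eis ω σ) (q : SLt R →* Q) (hm : q (-1) = 1)
    (h : q (gS R * gT 1) = 1 ∨ q (gS R * gT (-1)) = 1) (g : SLt R) : q g = 1 := by
  obtain ⟨y, hy, hy1⟩ : ∃ y : R, q (gS R) = q (gT y) ∧ (y = 1 ∨ y = -1) := by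
    rcases h with h | h
    · refine ⟨-1, ?_, Or.inr rfl⟩
      rw [map_mul, mul_eq_one_iff_eq_inv, ← map_inv, gTinv] at h; exact h
    · refine ⟨1, ?_, Or.inl rfl⟩
      rw [map_mul, mul_eq_one_iff_eq_inv, ← map_inv, gTinv, neg_neg] at h; exact h
  have hc := q_comm E q (fun x => by
    rw [hy, Commute, SemiconjBy, ← map_mul, ← map_mul, ← gT_add, ← gT_add, add_comm])
  have hs := q_comm_s E q hm hc
  refine q_triv E q hs ?_ (q_kill E q (fun x => hc _ _)) g
  rw [hs] at hy
  rcases hy1 with rfl | rfl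
  · exact hy.symm
  · rw [← gTinv, map_inv, eq_comm, inv_eq_one] at hy; exact hy

/-- upper triangular case -/
theorem q_upper (E : Eis ω σ) (q : SLt R →* Q) (hm : q (-1) = 1) (x : R) (h : q (gD E * gT x) = 1) :
    q (gD E) = 1 ∨ ∀ g, q g = 1 := by
  rw [map_mul, mul_eq_one_iff_eq_inv, ← map_inv, gTinv] at h
  have hk := q_kill E q (fun y => by
    rw [h, Commute, SemiconjBy, ← map_mul, ← map_mul, ← gT_add, ← gT_add, add_comm])
  have r1 := q_rel1 q hm
  have r2 := q_rel2 q hm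
  have r3 := q_rel3 E q hm
  have r4 : q (gS R) * q (gT 1) * (q (gS R) * q (gT 1)) = 1 → ∀ g, q g = 1 := by
    intro h4
    apply q_triv2 E q hm
    left
    rw [h4, one_mul] at r2
    rw [map_mul, r2]
  rcases qT_pow' E q hk (-x) with h' | h' | h' <;> rw [h'] at h
  · exact Or.inl h
  · right; rw [h] at r3; exact r4 r3
  · right
    apply r4
    rw [h] at r3
    generalize q (gS R) = s at *
    generalize q (gT 1) = t at *
    have e1 : s⁻¹ = s := inv_eq_of_mul_eq_one_left r1
    have e2 : s * t⁻¹ * s = t := by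
      rw [← mul_assoc] at r3
      exact mul_inv_eq_one.1 r3
    have e3 : s⁻¹ * t * s⁻¹ = t⁻¹ := by
      conv_rhs => rw [← e2]
      group
    rw [e1] at e3
    rw [← mul_assoc, e3, inv_mul_cancel]
end

end PD

section PE

set_option linter.all false
open Matrix

theorem V4_closed {Q : Type*} [Group Q] (a b c : Q) (ha : a * a = 1) (hb : b * b = 1) (hc : c * c = 1)
    (hab : a * b = c) : b * a = c ∧ c * a = b ∧ c * b = a ∧ a * c = b ∧ b * c = a := by
  have ia : a⁻¹ = a := inv_eq_of_mul_eq_one_left ha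
  have ib : b⁻¹ = b := inv_eq_of_mul_eq_one_left hb
  have ic : c⁻¹ = c := inv_eq_of_mul_eq_one_left hc
  have h1 : b * a = c := by
    rw [← ic, ← hab, _root_.mul_inv_rev, ia, ib]
  have h2 : a * c = b := by rw [← hab, ← mul_assoc, ha, one_mul]
  have h3 : c * b = a := by rw [← hab, mul_assoc, hb, mul_one]
  refine ⟨h1, ?_, h3, h2, ?_⟩
  · rw [← h1, mul_assoc, ha, mul_one]
  · rw [← h1, ← mul_assoc, hb, one_mul]

theorem W_closed {Q : Type*} [Group Q] (s t : Q) (r1 : s * s = 1) (r3 : t^3 = 1)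
    (r2 : s * t * (s * t) * (s * t) = 1) (u : Q)
    (hu : ∃ v, (v = 1 ∨ v = s ∨ v = t * s * t⁻¹ ∨ v = t⁻¹ * s * t) ∧
      ∃ y, (y = 1 ∨ y = t ∨ y = t⁻¹) ∧ u = v * y) :
    (∃ v, (v = 1 ∨ v = s ∨ v = t * s * t⁻¹ ∨ v = t⁻¹ * s * t) ∧
      ∃ y, (y = 1 ∨ y = t ∨ y = t⁻¹) ∧ u * s = v * y) ∧
    (∃ v, (v = 1 ∨ v = s ∨ v = t * s * t⁻¹ ∨ v = t⁻¹ * s * t) ∧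
      ∃ y, (y = 1 ∨ y = t ∨ y = t⁻¹) ∧ u * t = v * y) := by
  have is : s⁻¹ = s := inv_eq_of_mul_eq_one_left r1
  have tt : t * t = t⁻¹ := by
    rw [eq_inv_iff_mul_eq_one, ← r3, pow_succ, pow_two]
  have tit : t⁻¹ * t⁻¹ = t := by rw [← _root_.mul_inv_rev, tt, inv_inv]
  have hb : (t * s * t⁻¹) * (t * s * t⁻¹) = 1 := by
    have : (t * s * t⁻¹) * (t * s * t⁻¹) = t * (s * s) * t⁻¹ := by group
    rw [this, r1]; group
  have hc : (t⁻¹ * s * t) * (t⁻¹ * s * t) = 1 := by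
    have : (t⁻¹ * s * t) * (t⁻¹ * s * t) = t⁻¹ * (s * s) * t := by group
    rw [this, r1]; group
  have hab : s * (t * s * t⁻¹) = t⁻¹ * s * t := by
    have e1 : s * t * s = t⁻¹ * s * t⁻¹ := by
      have : s * t * s * (t * s⁻¹⁻¹ * t) = 1 := by rw [inv_inv, ← r2]; simp only [mul_assoc]
      rw [mul_eq_one_iff_eq_inv] at this
      rw [this, is]; simp only [_root_.mul_inv_rev, is, mul_assoc]
    have e2 : s * (t * s * t⁻¹) = s * t * s * t⁻¹ := by simp only [mul_assoc]
    rw [e2, e1, mul_assoc _ t⁻¹ t⁻¹, tit]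
  obtain ⟨k1, k2, k3, k4, k5⟩ := V4_closed _ _ _ r1 hb hc hab
  have f1 : t * s = (t * s * t⁻¹) * t := by group
  have f2 : t⁻¹ * s = (t⁻¹ * s * t) * t⁻¹ := by group
  obtain ⟨v, hv, y, hy, rfl⟩ := hu
  constructor
  · have hV : ∀ v, (v = 1 ∨ v = s ∨ v = t * s * t⁻¹ ∨ v = t⁻¹ * s * t) →
      ∀ w, (w = s ∨ w = t * s * t⁻¹ ∨ w = t⁻¹ * s * t) →
      (v * w = 1 ∨ v * w = s ∨ v * w = t * s * t⁻¹ ∨ v * w = t⁻¹ * s * t) := by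
      generalize t * s * t⁻¹ = b at *
      generalize t⁻¹ * s * t = c at *
      rintro v (rfl | rfl | rfl | rfl) w (rfl | rfl | rfl) <;> simp only [*, one_mul, true_or, or_true]
    rcases hy with rfl | rfl | rfl
    · exact ⟨_, hV v hv s (Or.inl rfl), 1, Or.inl rfl, by simp⟩
    · refine ⟨_, hV v hv _ (Or.inr (Or.inl rfl)), y, Or.inr (Or.inl rfl), ?_⟩
      rw [mul_assoc, mul_assoc v]; congr 1
    · refine ⟨_, hV v hv _ (Or.inr (Or.inr rfl)), t⁻¹, Or.inr (Or.inr rfl), ?_⟩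
      rw [mul_assoc, mul_assoc v]; congr 1
  · refine ⟨v, hv, y * t, ?_, by rw [mul_assoc]⟩
    rcases hy with rfl | rfl | rfl
    · right; left; simp
    · right; right; exact tt
    · left; simp

section
variable {R : Type*} [CommRing R] {ω : R} {σ : R →+* ℂ} {Q : Type*} [Group Q]

theorem q_words (E : Eis ω σ) (q : SLt R →* Q) (hm : q (-1) = 1) (hD : q (gD E) = 1) (g : SLt R) :
    ∃ v : SLt R, (v = 1 ∨ v = gS R ∨ v = gT 1 * gS R * gT (-1) ∨ v = gT (-1) * gS R * gT 1) ∧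
      ∃ x : R, (x = 0 ∨ x = 1 ∨ x = -1) ∧ q g = q (v * gT x) := by
  have hk := q_kill E q (fun x => by rw [hD]; exact Commute.one_left _)
  have r3 := qT_three E q hk
  have r1 := q_rel1 q hm
  have r2 := q_rel2 q hm
  have cl := W_closed _ _ r1 r3 r2
  set W : Set Q := {u | ∃ v, (v = 1 ∨ v = q (gS R) ∨ v = q (gT 1) * q (gS R) * (q (gT 1))⁻¹ ∨
      v = (q (gT 1))⁻¹ * q (gS R) * q (gT 1)) ∧
      ∃ y, (y = 1 ∨ y = q (gT 1) ∨ y = (q (gT 1))⁻¹) ∧ u = v * y} with hW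
  have clT : ∀ u ∈ W, ∀ x, u * q (gT x) ∈ W := by
    intro u hu x
    rcases qT_pow' E q hk x with h | h | h <;> rw [h]
    · simpa using hu
    · exact (cl u hu).2
    · have : (q (gT 1))⁻¹ = q (gT 1) * q (gT 1) := by
        rw [inv_eq_iff_mul_eq_one, ← r3, pow_succ, pow_two, mul_assoc]
      rw [this, ← mul_assoc]
      exact (cl _ (cl u hu).2).2
  have clS : ∀ u ∈ W, u * q (gS R) ∈ W := fun u hu => (cl u hu).1
  have hSi : (q (gS R))⁻¹ = q (gS R) := inv_eq_of_mul_eq_one_left r1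
  have hg : g ∈ Subgroup.closure ({gS R} ∪ Set.range (gT (R := R))) := by
    apply ggen E
    · exact Subgroup.subset_closure (by simp)
    · exact fun x => Subgroup.subset_closure (by simp)
  have hmem : q g ∈ W := by
    induction hg using Subgroup.closure_induction_right with
    | one => exact ⟨1, Or.inl rfl, 1, Or.inl rfl, by simp⟩
    | mul_right x hx y hy ih =>
      rw [map_mul]
      rcases hy with rfl | ⟨z, rfl⟩
      · exact clS _ ih
      · exact clT _ ih _
    | mul_inv_cancel x hx y hy ih =>
      rw [map_mul, map_inv]
      rcases hy with rfl | ⟨z, rfl⟩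
      · rw [hSi]; exact clS _ ih
      · rw [← map_inv, gTinv]; exact clT _ ih _
  obtain ⟨v, hv, y, hy, h⟩ := hmem
  have hy' : ∃ x : R, (x = 0 ∨ x = 1 ∨ x = -1) ∧ y = q (gT x) := by
    rcases hy with rfl | rfl | rfl
    · exact ⟨0, by simp, by simp [gT_zero]⟩
    · exact ⟨1, by simp, rfl⟩
    · exact ⟨-1, by simp, by rw [← gTinv, map_inv]⟩
  obtain ⟨x, hx, rfl⟩ := hy'
  have hv' : ∃ w : SLt R, (w = 1 ∨ w = gS R ∨ w = gT 1 * gS R * gT (-1) ∨ w = gT (-1) * gS R * gT 1) ∧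
      v = q w := by
    rcases hv with rfl | rfl | rfl | rfl
    · exact ⟨1, by simp, by simp⟩
    · exact ⟨_, Or.inr (Or.inl rfl), rfl⟩
    · exact ⟨_, Or.inr (Or.inr (Or.inl rfl)), by rw [← gTinv]; simp⟩
    · exact ⟨_, Or.inr (Or.inr (Or.inr rfl)), by rw [← gTinv]; simp⟩
  obtain ⟨w, hw, rfl⟩ := hv'
  exact ⟨w, hw, x, hx, by rw [h, map_mul]⟩

theorem center_iff {S : Type*} [CommRing S] (A : SLt S) :
    A ∈ Subgroup.center (SLt S) ↔ A 0 1 = 0 ∧ A 1 0 = 0 ∧ A 0 0 = A 1 1 := by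
  rw [Matrix.SpecialLinearGroup.mem_center_iff]
  constructor
  · rintro ⟨r, _, h⟩
    have e : ∀ i j, A i j = (Matrix.scalar (Fin 2) r) i j := fun i j => by rw [h]
    simp [e]
  · rintro ⟨h1, h2, h3⟩
    refine ⟨A 1 1, ?_, ?_⟩
    · have := gdet A
      rw [h1, h3, zero_mul, sub_zero] at this
      simpa [pow_two] using this
    · ext i j
      fin_cases i <;> fin_cases j <;> simp [h1, h2, h3]

theorem center_index : (Subgroup.center (SLt (ZMod 3))).index = 12 := by
  have h1 : Nat.card (SLt (ZMod 3)) = 24 := by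
    rw [Nat.card_eq_fintype_card]
    decide +kernel
  have h2 : Nat.card (Subgroup.center (SLt (ZMod 3))) = 2 := by
    have e : (Subgroup.center (SLt (ZMod 3)) : Set (SLt (ZMod 3))) =
      ((Finset.univ.filter (fun A : SLt (ZMod 3) => A 0 1 = 0 ∧ A 1 0 = 0 ∧ A 0 0 = A 1 1) :
        Finset (SLt (ZMod 3))) : Set (SLt (ZMod 3))) := by
      ext A
      simp only [SetLike.mem_coe, center_iff, Finset.coe_filter, Finset.mem_univ, true_and, Set.mem_setOf_eq]
    have : Nat.card (Subgroup.center (SLt (ZMod 3))) = Set.ncard (Subgroup.center (SLt (ZMod 3)) : Set (SLt (ZMod 3))) := rfl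
    rw [this, e, Set.ncard_coe_finset]
    decide +kernel
  have := (Subgroup.center (SLt (ZMod 3))).card_mul_index
  rw [h1, h2] at this
  omega

theorem sl3_gen : ∀ h : SLt (ZMod 3), ∃ a b c d : ZMod 3,
    h = gT a * gS _ * gT b * gS _ * gT c * gS _ * gT d := by
  decide +kernel

theorem gmap {S : Type*} [CommRing S] (f : R →+* S) (g : SLt R) (i j : Fin 2) :
    (Matrix.SpecialLinearGroup.map f g) i j = f (g i j) := rfl
theorem map_gT {S : Type*} [CommRing S] (f : R →+* S) (x : R) :
    Matrix.SpecialLinearGroup.map f (gT x) = gT (f x) := by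
  apply gext <;> simp only [gmap, gT00, gT01, gT10, gT11, map_one, map_zero]
theorem map_gS {S : Type*} [CommRing S] (f : R →+* S) :
    Matrix.SpecialLinearGroup.map f (gS R) = gS S := by
  apply gext <;> simp only [gmap, gS00, gS01, gS10, gS11, map_one, map_zero, map_neg]

theorem red_surj (f : R →+* ZMod 3) :
    Function.Surjective (Matrix.SpecialLinearGroup.map (n := Fin 2) f) := by
  have hf : Function.Surjective f := ZMod.ringHom_surjective f
  intro h
  obtain ⟨a, b, c, d, rfl⟩ := sl3_gen h
  obtain ⟨a, rfl⟩ := hf a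
  obtain ⟨b, rfl⟩ := hf b
  obtain ⟨c, rfl⟩ := hf c
  obtain ⟨d, rfl⟩ := hf d
  exact ⟨gT a * gS _ * gT b * gS _ * gT c * gS _ * gT d, by simp only [map_mul, map_gT, map_gS]⟩
end

end PE

theorem Eis_exists (ω : Eisenstein) (hω : ω ^ 2 + ω + 1 = 0) : ∃ σ : Eisenstein →+* ℂ, Eis ω σ := by
  obtain ⟨τ⟩ : Nonempty (CyclotomicField 3 ℚ →+* ℂ) := inferInstance
  have hprim : IsPrimitiveRoot (ω : CyclotomicField 3 ℚ) 3 := by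
    have h := congrArg (fun z : Eisenstein => (z : CyclotomicField 3 ℚ)) hω
    simp only [map_add, map_pow, map_one, map_zero] at h
    have : NeZero ((3:ℕ) : CyclotomicField 3 ℚ) := ⟨by norm_num⟩
    rw [← Polynomial.isRoot_cyclotomic_iff, Polynomial.cyclotomic_three]
    simpa using h
  have : NeZero ((3:ℕ) : ℚ) := ⟨by norm_num⟩
  have : IsCyclotomicExtension {3} ℚ (CyclotomicField 3 ℚ) := CyclotomicField.isCyclotomicExtension 3 ℚ
  refine ⟨τ.comp (algebraMap _ _), hω, ?_, ?_⟩
  · intro z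
    have h1 : Algebra.adjoin ℤ {ω} = ⊤ := by
      have := hprim.integralPowerBasis.adjoin_gen_eq_top
      rw [hprim.integralPowerBasis_gen] at this
      exact this
    have hz : z ∈ Algebra.adjoin ℤ {ω} := by rw [h1]; trivial
    induction hz using Algebra.adjoin_induction with
    | mem x hx => rw [Set.mem_singleton_iff] at hx; exact ⟨0, 1, by simp [hx]⟩
    | algebraMap r => exact ⟨r, 0, by simp⟩
    | add x y _ _ hx hy =>
      obtain ⟨m, n, rfl⟩ := hx
      obtain ⟨m', n', rfl⟩ := hy
      exact ⟨m+m', n+n', by push_cast; ring⟩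
    | mul x y _ _ hx hy =>
      obtain ⟨m, n, rfl⟩ := hx
      obtain ⟨m', n', rfl⟩ := hy
      exact ⟨m*m' - n*n', m*n'+n*m'-n*n', by push_cast; linear_combination (n * n') * hω⟩
  · exact τ.injective.comp (NumberField.RingOfIntegers.coe_injective)

section
variable {R : Type*} [CommRing R] {ω : R} {σ : R →+* ℂ}

/-- the congruence subgroup upstairs -/
def KG (R : Type*) [CommRing R] (I : Ideal R) : Subgroup (SLt R) :=
  (PSL2Map (Ideal.Quotient.mk I)).ker.comap (QuotientGroup.mk' (Subgroup.center (SLt R)))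

theorem mem_KG (I : Ideal R) (g : SLt R) :
    g ∈ KG R I ↔ g 0 1 ∈ I ∧ g 1 0 ∈ I ∧ g 0 0 - g 1 1 ∈ I := by
  have : g ∈ KG R I ↔ ((Matrix.SpecialLinearGroup.map (Ideal.Quotient.mk I) g : SLt (R ⧸ I)) : PSL2 (R ⧸ I)) = 1 :=
    Iff.rfl
  rw [this, QuotientGroup.eq_one_iff, center_iff]
  simp only [gmap, Ideal.Quotient.eq_zero_iff_mem, Ideal.Quotient.eq]

theorem KG_index (E : Eis ω σ) : (KG R (Ideal.span {2*ω+1})).index = 12 := by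
  obtain ⟨f, hf1, hf⟩ := E.phi
  have : KG R (Ideal.span {2*ω+1}) =
      (Subgroup.center (SLt (ZMod 3))).comap (Matrix.SpecialLinearGroup.map f) := by
    ext g
    rw [mem_KG, Subgroup.mem_comap, center_iff]
    simp only [gmap, ← hf, map_sub, sub_eq_zero]
  rw [this, Subgroup.index_comap_of_surjective _ (red_surj f), center_index]

theorem neg_one_center : (-1 : SLt R) ∈ Subgroup.center (SLt R) := by
  rw [center_iff]; simp

theorem one_not_mem (E : Eis ω σ) : (1:R) ∉ Ideal.span {2*ω+1} := by
  intro h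
  rw [Ideal.mem_span_singleton] at h
  obtain ⟨z, hz⟩ := h
  exact E.three z hz.symm

theorem word_not_mem (E : Eis ω σ) (v : SLt R)
    (hv : v = 1 ∨ v = gS R ∨ v = gT 1 * gS R * gT (-1) ∨ v = gT (-1) * gS R * gT 1) (x : R)
    (hx : x = 0 ∨ x = 1 ∨ x = -1) (h : v * gT x ∈ KG R (Ideal.span {2*ω+1})) : v = 1 ∧ x = 0 := by
  rw [mem_KG] at h
  obtain ⟨h1, h2, -⟩ := h
  have := one_not_mem E
  rcases hv with rfl | rfl | rfl | rfl
  · refine ⟨rfl, ?_⟩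
    rw [one_mul, gT01] at h1
    rcases hx with rfl | rfl | rfl
    · rfl
    · exact absurd h1 this
    · exact absurd (neg_mem_iff.1 h1) this
  all_goals
    exfalso
    apply this
    simp only [gmul, gS00, gS01, gS10, gS11, gT00, gT01, gT10, gT11] at h2
    convert h2 using 1
    ring

theorem KG_le (E : Eis ω σ) {Q : Type*} [Group Q] (q : SLt R →* Q) (hm : q (-1) = 1)
    (hD : q (gD E) = 1) (g : SLt R) (hg : g ∈ KG R (Ideal.span {2*ω+1})) : q g = 1 := by
  have hn1 : (KG R (Ideal.span {2*ω+1})).Normal := by unfold KG; infer_instance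
  let N := q.ker ⊓ KG R (Ideal.span {2*ω+1})
  have hN : N.Normal := inferInstance
  have hmem : ∀ u, QuotientGroup.mk' N u = 1 ↔ u ∈ N := fun u => QuotientGroup.eq_one_iff u
  have hmK : (-1 : SLt R) ∈ KG R (Ideal.span {2*ω+1}) := by rw [mem_KG]; simp
  have hDK : gD E ∈ KG R (Ideal.span {2*ω+1}) := by
    rw [mem_KG, gD00, gD01, gD10, gD11]
    refine ⟨zero_mem _, zero_mem _, ?_⟩
    rw [Ideal.mem_span_singleton]
    exact ⟨1, by linear_combination -E.hω⟩
  obtain ⟨v, hv, x, hx, h⟩ := q_words E (QuotientGroup.mk' N) ((hmem _).2 ⟨hm, hmK⟩) ((hmem _).2 ⟨hD, hDK⟩) g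
  · rw [← inv_mul_eq_one, ← map_inv, ← map_mul, hmem] at h
    have h2 : v * gT x ∈ KG R (Ideal.span {2*ω+1}) := by
      have h' : g⁻¹ * (v * gT x) ∈ KG R (Ideal.span {2*ω+1}) := h.2
      rwa [Subgroup.mul_mem_cancel_left _ (inv_mem hg)] at h'
    obtain ⟨rfl, rfl⟩ := word_not_mem E v hv x hx h2
    have this : g⁻¹ * (1 * gT 0) ∈ q.ker := h.1
    rw [MonoidHom.mem_ker, gT_zero, mul_one, mul_one, map_inv, inv_eq_one] at this
    exact this

theorem dichotomy (E : Eis ω σ) {Q : Type*} [Group Q] (q : SLt R →* Q) (hm : q (-1) = 1)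
    (hD : q (gD E) = 1) : q.ker = KG R (Ideal.span {2*ω+1}) ∨ q (gS R) = 1 ∨ ∀ g, q g = 1 := by
  by_cases hk : q.ker ≤ KG R (Ideal.span {2*ω+1})
  · exact Or.inl (le_antisymm hk (fun g hg => KG_le E q hm hD g hg))
  right
  rw [SetLike.not_le_iff_exists] at hk
  obtain ⟨g, hg, hgK⟩ := hk
  have hn1 : (KG R (Ideal.span {2*ω+1})).Normal := by unfold KG; infer_instance
  have hkill := q_kill E q (fun x => by rw [hD]; exact Commute.one_left _)
  have hmK : (-1 : SLt R) ∈ KG R (Ideal.span {2*ω+1}) := by rw [mem_KG]; simp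
  have hDK : gD E ∈ KG R (Ideal.span {2*ω+1}) := by
    rw [mem_KG, gD00, gD01, gD10, gD11]
    refine ⟨zero_mem _, zero_mem _, ?_⟩
    rw [Ideal.mem_span_singleton]
    exact ⟨1, by linear_combination -E.hω⟩
  have hmem : ∀ u, QuotientGroup.mk' (KG R (Ideal.span {2*ω+1})) u = 1 ↔ u ∈ KG R (Ideal.span {2*ω+1}) :=
    fun u => QuotientGroup.eq_one_iff u
  obtain ⟨v, hv, x, hx, h⟩ := q_words E (QuotientGroup.mk' (KG R (Ideal.span {2*ω+1})))
    ((hmem _).2 hmK) ((hmem _).2 hDK) g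
  rw [← inv_mul_eq_one, ← map_inv, ← map_mul, hmem] at h
  have h1 := KG_le E q hm hD _ h
  rw [map_mul, map_inv, MonoidHom.mem_ker.1 hg, inv_one, one_mul] at h1
  have hne : ¬ (v = 1 ∧ x = 0) := by
    rintro ⟨rfl, rfl⟩
    apply hgK
    rw [gT_zero, mul_one, mul_one] at h
    exact inv_mem_iff.1 h
  have hT1 : q (gT (-1)) = (q (gT 1))⁻¹ := by rw [← gTinv, map_inv]
  have r1 := q_rel1 q hm
  have r2 := q_rel2 q hm
  have r3 := qT_three E q hkill
  have triv1 : q (gT 1) = 1 → ∀ g, q g = 1 := by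
    intro ht
    rw [ht, mul_one, r1, one_mul] at r2
    exact q_triv E q r2 ht hkill
  have triv2 := q_triv2 E q hm
  rw [map_mul, map_mul, hT1] at triv2
  have tt : q (gT 1) * q (gT 1) = (q (gT 1))⁻¹ := by
    rw [eq_inv_iff_mul_eq_one, ← r3, pow_succ, pow_two]
  have tit : (q (gT 1))⁻¹ * (q (gT 1))⁻¹ = q (gT 1) := by rw [← _root_.mul_inv_rev, tt, inv_inv]
  rw [map_mul] at h1
  rcases hv with rfl | rfl | rfl | rfl
  · right
    apply triv1
    rw [map_one, one_mul] at h1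
    rcases hx with rfl | rfl | rfl
    · exact absurd ⟨rfl, rfl⟩ hne
    · exact h1
    · rw [hT1, inv_eq_one] at h1; exact h1
  · rcases hx with rfl | rfl | rfl
    · left; simpa [gT_zero] using h1
    · right; exact triv2 (Or.inl h1)
    · right; rw [hT1] at h1; exact triv2 (Or.inr h1)
  · rw [map_mul, map_mul, hT1] at h1
    have e : ∀ y, q (gT 1) * q (gS R) * (q (gT 1))⁻¹ * y = 1 → q (gS R) * ((q (gT 1))⁻¹ * y * q (gT 1)) = 1 := by
      intro y hy
      have : q (gS R) * ((q (gT 1))⁻¹ * y * q (gT 1)) =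
        (q (gT 1))⁻¹ * (q (gT 1) * q (gS R) * (q (gT 1))⁻¹ * y) * q (gT 1) := by group
      rw [this, hy]; group
    have h2 := e _ h1
    rcases hx with rfl | rfl | rfl
    · left; simpa [gT_zero] using h2
    · right; apply triv2; left; simpa using h2
    · right; apply triv2; right; rw [hT1] at h2; simpa using h2
  · rw [map_mul, map_mul, hT1] at h1
    have e : ∀ y, (q (gT 1))⁻¹ * q (gS R) * (q (gT 1)) * y = 1 → q (gS R) * ((q (gT 1)) * y * (q (gT 1))⁻¹) = 1 := by
      intro y hy
      have : q (gS R) * ((q (gT 1)) * y * (q (gT 1))⁻¹) =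
        (q (gT 1)) * ((q (gT 1))⁻¹ * q (gS R) * (q (gT 1)) * y) * (q (gT 1))⁻¹ := by group
      rw [this, hy]; group
    have h2 := e _ h1
    rcases hx with rfl | rfl | rfl
    · left; simpa [gT_zero] using h2
    · right; apply triv2; left; simpa using h2
    · right; apply triv2; right; rw [hT1] at h2; simpa using h2

theorem main_aux [IsDomain R] (E : Eis ω σ)
    (Ω : Subgroup (PSL2 R)) (hn : Ω.Normal) (hproper : Ω ≠ ⊤)
    (x : PSL2 R) (hxΩ : x ∈ Ω) (hx1 : x ≠ 1) (hx : IsOfFinOrder x) :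
    (Ω = commutator (PSL2 R) ∧ Ω.index = 3) ∨
      (Ω.index = 12 ∧
        Ω = (PSL2Map (Ideal.Quotient.mk
              (Ideal.span ({2 * ω + 1} : Set R)))).ker) := by
  let p : SLt R →* PSL2 R := QuotientGroup.mk' _
  have hp : Function.Surjective p := QuotientGroup.mk'_surjective _
  have hpc : ∀ g, p g = 1 ↔ g ∈ Subgroup.center (SLt R) := fun g => QuotientGroup.eq_one_iff g
  let q : SLt R →* PSL2 R ⧸ Ω := (QuotientGroup.mk' Ω).comp p
  have hq : ∀ g, q g = 1 ↔ p g ∈ Ω := fun g => QuotientGroup.eq_one_iff (p g)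
  have hpm : p (-1) = 1 := (hpc _).2 neg_one_center
  have hm : q (-1) = 1 := (hq _).2 (by rw [hpm]; exact one_mem _)
  have notriv : ¬ ∀ g, q g = 1 := by
    intro h
    apply hproper
    rw [eq_top_iff]
    intro y _
    obtain ⟨g, rfl⟩ := hp y
    exact (hq g).1 (h g)
  have caseS : q (gS R) = 1 → (Ω = commutator (PSL2 R) ∧ Ω.index = 3) := by
    intro hs
    have hc := q_comm E q (fun x => by rw [hs]; exact Commute.one_left _)
    have hle : commutator (PSL2 R) ≤ Ω := by
      rw [commutator_def, Subgroup.commutator_le]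
      intro a _ b _
      obtain ⟨g, rfl⟩ := hp a
      obtain ⟨h, rfl⟩ := hp b
      rw [← map_commutatorElement, ← hq, map_commutatorElement, commutatorElement_eq_one_iff_commute]
      exact hc g h
    have hcard : (commutator (PSL2 R)).index ∣ 3 := by
      have := q_card E ((Abelianization.of (G := PSL2 R)).comp p) (by simp [hpm])
        ((QuotientGroup.mk_surjective).comp hp) (fun g g' => Commute.all _ _)
      exact this
    have hrel := Subgroup.relIndex_mul_index hle
    have hne1 : Ω.index ≠ 1 := by rwa [Ne, Subgroup.index_eq_one]
    have hΩ : Ω.index ∣ 3 := (Subgroup.index_dvd_of_le hle).trans hcard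
    have h3 : Ω.index = 3 := ((Nat.dvd_prime Nat.prime_three).1 hΩ).resolve_left hne1
    refine ⟨le_antisymm ?_ hle, h3⟩
    rw [← Subgroup.relIndex_eq_one]
    have h4 : (commutator (PSL2 R)).index = 3 := by
      apply Nat.dvd_antisymm hcard
      rw [← h3]; exact Subgroup.index_dvd_of_le hle
    rw [h3, h4] at hrel
    omega
  obtain ⟨g, rfl⟩ := hp x
  have hgq : q g = 1 := (hq g).2 hxΩ
  have hg1 : g ≠ 1 := by rintro rfl; exact hx1 (map_one p)
  have hg2 : g ≠ -1 := by rintro rfl; exact hx1 hpm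
  obtain ⟨n, hn0, hgn⟩ := hx.exists_pow_eq_one
  rw [← map_pow, hpc, center_iff] at hgn
  have hgn2 : g^(n*2) = 1 := by
    obtain ⟨a1, a2, a3⟩ := hgn
    have hd := gdet (g^n)
    rw [a1, a3, zero_mul, sub_zero] at hd
    rw [pow_mul, pow_two]
    apply gext <;> simp only [gmul, a1, a2, a3, g100, g101, g110, g111]
    · linear_combination hd
    · ring
    · ring
    · linear_combination hd
  have tr1 : ∀ u : SLt R, u 0 0 + u 1 1 = 1 → q u = 1 → (Ω = commutator (PSL2 R) ∧ Ω.index = 3) ∨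
      (Ω.index = 12 ∧
        Ω = (PSL2Map (Ideal.Quotient.mk
              (Ideal.span ({2 * ω + 1} : Set R)))).ker) := by
    intro u hu hqu
    rcases trace_one E q hm u hu hqu with h | h | ⟨y, h⟩
    · exact absurd (q_triv2 E q hm (Or.inl h)) notriv
    · exact absurd (q_triv2 E q hm (Or.inr h)) notriv
    · rcases q_upper E q hm y h with h | h
      · rcases dichotomy E q hm h with h | h | h
        · right
          have hker : q.ker = Ω.comap p := by
            ext u; exact hq u
          rw [hker] at h
          constructor
          · rw [← KG_index E, ← h, Subgroup.index_comap_of_surjective _ hp]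
          · exact Subgroup.comap_injective hp h
        · exact Or.inl (caseS h)
        · exact absurd h notriv
      · exact absurd h notriv
  rcases trace_of_fin E g (n*2) (by omega) hgn2 hg1 hg2 with h | h | h
  · exact Or.inl (caseS (trace_zero E q hm g h hgq))
  · exact tr1 g h hgq
  · exact tr1 (-g) h (by rw [← neg_one_mul, map_mul, hm, hgq, one_mul])
end

/-- If `Ω` is a proper normal subgroup of `Γ = PSL(2, ℤ[ω])` containing a
nontrivial element of finite order, then either `Ω` is the commutator subgroup
of `Γ` (of index 3), or `Ω` has index 12 and is the kernel of reduction modulo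
the prime `⟨2ω+1⟩ = ⟨√-3⟩` above 3. -/
theorem normal_subgroup_with_torsion (ω : Eisenstein) (hω : ω ^ 2 + ω + 1 = 0)
    (Ω : Subgroup (PSL2 Eisenstein)) (hn : Ω.Normal) (hproper : Ω ≠ ⊤)
    (x : PSL2 Eisenstein) (hxΩ : x ∈ Ω) (hx1 : x ≠ 1) (hx : IsOfFinOrder x) :
    (Ω = commutator (PSL2 Eisenstein) ∧ Ω.index = 3) ∨
      (Ω.index = 12 ∧
        Ω = (PSL2Map (Ideal.Quotient.mk
              (Ideal.span ({2 * ω + 1} : Set Eisenstein)))).ker) := by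
  obtain ⟨σ, E⟩ := Eis_exists ω hω
  exact main_aux E Ω hn hproper x hxΩ hx1 hx
end
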